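/- arXiv:2002.03361 — 5 statements merged into one kernel-verified Lean document; each statement's English description precedes it below -/
import Mathlib

section
/- For each prime p, the limit η_p := lim_{k→∞} c_{k,p} p^k exists, and for consecutive primes p < q one has c_{k,p} = η_p p^{-k} + O_p(q^{-k}). -/
open Filter Real Asymptotics
open scoped Classical Topology BigOperators

/-- The finite set of primes `p ≤ x`, for a real number `x`. -/
noncomputable def primesUpTo (x : ℝ) : Finset ℕ :=
  (Finset.range (⌊x⌋₊ + 1)).filter Nat.Prime

/-- `n` is `x`-smooth: `n` is a positive integer all of whose prime factors are `≤ x`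
(equivalently, `P⁺(n) ≤ x`). -/
def IsSmooth (x : ℝ) (n : ℕ) : Prop := 0 < n ∧ ∀ p ∈ n.primeFactors, (p : ℝ) ≤ x

/-- `Ω n`: number of prime factors of `n` counted with multiplicity. -/
def bigOmega (n : ℕ) : ℕ := n.primeFactorsList.length

/-- Truncated prime zeta function `Z(t, x) = ∑_{p ≤ x} p^{-t}`. -/
noncomputable def Ztr (t x : ℝ) : ℝ := ∑ p ∈ primesUpTo x, (p : ℝ) ^ (-t)

/-- Prime zeta function `Z(j) = ∑_p p^{-j}`. -/
noncomputable def Zp (j : ℕ) : ℝ := ∑' p : Nat.Primes, (1 : ℝ) / ((p : ℕ) : ℝ) ^ j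

/-!
Write `F q = ∑ₖ c_{k,q} Xᵏ`. The recurrence for `c` is Newton's identity, so
`F 2 = exp (∑_{j ≥ 2} Z(j) Xʲ / j)`, and passing from a prime `p` to the next prime `q` multiplies
by `1 - X / p`. Hence `X (F q)' / F q` has `j`-th coefficient `∑_{r ≥ q} r⁻ʲ = O(q⁻ʲ)` for `j ≥ 2`,
and the coefficients of `F q` are `O(ρᵏ)` for every `ρ > q⁻¹`. Since `F q = (1 - X / p) F p`, the
increments of `c_{k,p} pᵏ` are `c_{k+1,q} pᵏ⁺¹`. Taking `q⁻¹ < ρ < p⁻¹`, these are `O((ρp)ᵏ)`, so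
`c_{k,p} pᵏ` converges and `c_{k,p} = O(p⁻ᵏ)`. This holds for every prime; using it for `q` in place
of the bound `O(ρᵏ)` sharpens the error term for `p` to `O(q⁻ᵏ)`.
-/

theorem norm_lt_norm_of_nonneg_of_lt {x y : ℝ} (hx : 0 ≤ x) (hxy : x < y) : ‖x‖ < ‖y‖ := by
  rwa [Real.norm_of_nonneg hx, Real.norm_of_nonneg (hx.trans hxy.le)]

theorem tsum_pow_add_le {ι : Type*} {a : ι → ℝ} {θ : ℝ} {n : ℕ} (ha0 : ∀ i, 0 ≤ a i)
    (haθ : ∀ i, a i ≤ θ) (ha : Summable fun i => a i ^ n) (m : ℕ) :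
    ∑' i, a i ^ (m + n) ≤ θ ^ m * ∑' i, a i ^ n := by
  have hle (i : ι) : a i ^ (m + n) ≤ θ ^ m * a i ^ n := by
    rw [pow_add]
    exact mul_le_mul_of_nonneg_right (pow_le_pow_left₀ (ha0 i) (haθ i) m) (pow_nonneg (ha0 i) n)
  rw [← tsum_mul_left]
  exact Summable.tsum_le_tsum hle
    (.of_nonneg_of_le (fun i => pow_nonneg (ha0 i) _) hle (ha.mul_left _)) (ha.mul_left _)

section EulerLogDeriv

open PowerSeries
open Finset.HasAntidiagonal (antidiagonal mem_antidiagonal)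

section CommRing

variable {R : Type*} [CommRing R]

/-- `g` is the logarithmic derivative of `f` for the Euler operator `X · d/dX`, in the
division-free form `X f' = f g`. -/
def IsEulerLogDeriv (f g : R⟦X⟧) : Prop := X * d⁄dX R f = f * g

theorem coeff_X_mul_derivative (f : R⟦X⟧) (k : ℕ) :
    coeff k (X * d⁄dX R f) = (k : R) * coeff k f := by
  cases k with
  | zero => simp
  | succ k => rw [coeff_succ_X_mul, coeff_derivative, mul_comm, Nat.cast_succ]

theorem isEulerLogDeriv_iff {f g : R⟦X⟧} :
    IsEulerLogDeriv f g ↔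
      ∀ k : ℕ, (k : R) * coeff k f = ∑ x ∈ antidiagonal k, coeff x.1 f * coeff x.2 g := by
  rw [IsEulerLogDeriv, PowerSeries.ext_iff]
  exact forall_congr' fun k => by rw [coeff_X_mul_derivative, coeff_mul k f g]

theorem IsEulerLogDeriv.mul {f₁ f₂ g₁ g₂ : R⟦X⟧} (h₁ : IsEulerLogDeriv f₁ g₁)
    (h₂ : IsEulerLogDeriv f₂ g₂) : IsEulerLogDeriv (f₁ * f₂) (g₁ + g₂) := by
  unfold IsEulerLogDeriv at *
  rw [Derivation.leibniz, smul_eq_mul, smul_eq_mul]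
  linear_combination f₂ * h₁ + f₁ * h₂

theorem IsEulerLogDeriv.rescale {f g : R⟦X⟧} (h : IsEulerLogDeriv f g) (a : R) :
    IsEulerLogDeriv (PowerSeries.rescale a f) (PowerSeries.rescale a g) := by
  rw [isEulerLogDeriv_iff] at h ⊢
  intro k
  rw [coeff_rescale, mul_left_comm, h, Finset.mul_sum]
  refine Finset.sum_congr rfl fun x hx => ?_
  rw [← mem_antidiagonal.mp hx, coeff_rescale, coeff_rescale, pow_add]
  ring

theorem one_sub_C_mul_X_mul_mk_pow (a : R) : (1 - C a * X) * PowerSeries.mk (a ^ ·) = 1 := by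
  have h := congrArg (PowerSeries.rescale a) (mk_one_mul_one_sub_eq_one R)
  rw [map_mul, map_sub, map_one, rescale_X, rescale_mk, mul_comm] at h
  simpa using h

theorem isEulerLogDeriv_one_sub_C_mul_X (a : R) :
    IsEulerLogDeriv (1 - C a * X) (1 - PowerSeries.mk (a ^ ·)) := by
  rw [IsEulerLogDeriv, mul_sub, one_sub_C_mul_X_mul_mk_pow]
  simp [Derivation.leibniz, mul_comm]

theorem coeff_succ_one_sub_C_mul_X_mul (a : R) (f : R⟦X⟧) (k : ℕ) :
    coeff (k + 1) ((1 - C a * X) * f) = coeff (k + 1) f - a * coeff k f := by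
  rw [sub_mul, one_mul, map_sub, mul_assoc, coeff_C_mul, coeff_succ_X_mul]

theorem mk_eq_one_sub_C_mul_X_mul_mk {a : R} {u v : ℕ → R} (h0 : v 0 = u 0)
    (hsucc : ∀ k, v (k + 1) = u (k + 1) - a * u k) :
    PowerSeries.mk v = (1 - C a * X) * PowerSeries.mk u := by
  ext k
  cases k with
  | zero => simp [h0]
  | succ k => simp only [coeff_succ_one_sub_C_mul_X_mul, coeff_mk, hsucc]

end CommRing

theorem isEulerLogDeriv_mk_of_recurrence {K : Type*} [Field K] [CharZero K] {c z : ℕ → K} {m : ℕ}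
    (hm : 0 < m)
    (hc : ∀ k, 1 ≤ k → c k = (1 / (k : K)) * ∑ j ∈ Finset.Icc m k, c (k - j) * z j) :
    IsEulerLogDeriv (PowerSeries.mk c) (PowerSeries.mk fun j => if j < m then 0 else z j) := by
  rw [isEulerLogDeriv_iff]
  intro k
  simp only [coeff_mk]
  have h_sum : ∑ x ∈ antidiagonal k, c x.1 * (if x.2 < m then 0 else z x.2) =
      ∑ j ∈ Finset.Icc m k, c (k - j) * z j := by
    rw [← Finset.Nat.sum_antidiagonal_swap, Finset.Nat.sum_antidiagonal_eq_sum_range_succ_mk]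
    simp only [Prod.fst_swap, Prod.snd_swap, mul_ite, mul_zero, ← not_le, ite_not,
      ← Finset.sum_filter]
    refine Finset.sum_congr ?_ fun _ _ => rfl
    grind
  rw [h_sum]
  rcases Nat.eq_zero_or_pos k with rfl | hk
  · simp [Finset.Icc_eq_empty_of_lt hm]
  · have hk0 : (k : K) ≠ 0 := Nat.cast_ne_zero.mpr hk.ne'
    rw [hc k hk, ← mul_assoc, mul_one_div_cancel hk0, one_mul]

section RCLike

variable {𝕜 : Type*} [RCLike 𝕜] {f g : 𝕜⟦X⟧}

theorem IsEulerLogDeriv.norm_coeff_le_of_forall_lt (h : IsEulerLogDeriv f g)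
    (hg0 : coeff 0 g = 0) (hg : Summable fun j => ‖coeff j g‖) {M : ℝ} {k : ℕ}
    (hk : 0 < k) (hgk : ∑' j, ‖coeff j g‖ ≤ k) (hlt : ∀ i < k, ‖coeff i f‖ ≤ M) :
    ‖coeff k f‖ ≤ M := by
  have hM : 0 ≤ M := (norm_nonneg _).trans (hlt 0 hk)
  have hterm : ∀ x ∈ antidiagonal k,
      ‖coeff x.1 f * coeff x.2 g‖ ≤ M * ‖coeff x.2 g‖ := by
    rintro ⟨i, j⟩ hij
    rw [mem_antidiagonal] at hij
    rw [norm_mul]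
    rcases Nat.eq_zero_or_pos j with rfl | hj
    · simp [hg0]
    · exact mul_le_mul_of_nonneg_right (hlt i (by omega)) (norm_nonneg _)
  have hsum : ∑ x ∈ antidiagonal k, ‖coeff x.2 g‖ ≤ k := by
    rw [← Finset.Nat.sum_antidiagonal_swap, Finset.Nat.sum_antidiagonal_eq_sum_range_succ_mk]
    exact (hg.sum_le_tsum _ fun _ _ => norm_nonneg _).trans hgk
  have hmul : (k : ℝ) * ‖coeff k f‖ ≤ k * M :=
    calc (k : ℝ) * ‖coeff k f‖ = ‖(k : 𝕜) * coeff k f‖ := by rw [norm_mul, RCLike.norm_natCast]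
      _ = ‖∑ x ∈ antidiagonal k, coeff x.1 f * coeff x.2 g‖ := by
        rw [isEulerLogDeriv_iff.mp h]
      _ ≤ ∑ x ∈ antidiagonal k, M * ‖coeff x.2 g‖ := norm_sum_le_of_le _ hterm
      _ ≤ M * k := by
        rw [← Finset.mul_sum]
        exact mul_le_mul_of_nonneg_left hsum hM
      _ = k * M := mul_comm _ _
  exact le_of_mul_le_mul_left hmul (Nat.cast_pos.mpr hk)

theorem IsEulerLogDeriv.exists_norm_coeff_le (h : IsEulerLogDeriv f g) (hg0 : coeff 0 g = 0)
    (hg : Summable fun j => ‖coeff j g‖) : ∃ M, ∀ k, ‖coeff k f‖ ≤ M := by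
  obtain ⟨N, hN⟩ := exists_nat_ge (∑' j, ‖coeff j g‖)
  refine ⟨∑ i ∈ Finset.range (N + 1), ‖coeff i f‖, fun k => ?_⟩
  induction k using Nat.strong_induction_on with
  | _ k ih =>
    rcases Nat.lt_or_ge k (N + 1) with hk | hk
    · exact Finset.single_le_sum (f := fun i => ‖coeff i f‖) (fun _ _ => norm_nonneg _)
        (Finset.mem_range.mpr hk)
    · have hNk : (N : ℝ) ≤ k := by exact_mod_cast (Nat.le_succ N).trans hk
      exact h.norm_coeff_le_of_forall_lt hg0 hg (by omega) (hN.trans hNk) ih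

theorem IsEulerLogDeriv.coeff_isBigO (h : IsEulerLogDeriv f g) (hg0 : coeff 0 g = 0) {a b : 𝕜}
    (hg : (fun j => coeff j g) =O[atTop] fun j => a ^ j) (hab : ‖a‖ < ‖b‖) :
    (fun k => coeff k f) =O[atTop] fun k => b ^ k := by
  have hb : b ≠ 0 := norm_pos_iff.mp ((norm_nonneg a).trans_lt hab)
  have hratio : ‖b⁻¹ * a‖ < 1 := by
    rwa [norm_mul, norm_inv, inv_mul_lt_one₀ (norm_pos_iff.mpr hb)]
  have hsummable : Summable fun j => ‖coeff j (PowerSeries.rescale b⁻¹ g)‖ := by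
    refine summable_of_isBigO_nat (summable_geometric_of_lt_one (norm_nonneg _) hratio) ?_
    simp only [coeff_rescale, ← norm_pow, mul_pow]
    exact ((isBigO_refl _ _).mul hg).norm_norm
  obtain ⟨M, hM⟩ := (h.rescale b⁻¹).exists_norm_coeff_le (by simp [hg0]) hsummable
  refine isBigO_of_le' (c := M) _ fun k => ?_
  have hk := hM k
  rwa [coeff_rescale, inv_pow, norm_mul, norm_inv,
    inv_mul_le_iff₀ (norm_pos_iff.mpr (pow_ne_zero k hb)), mul_comm] at hk

end RCLike

end EulerLogDeriv

section GeometricConvergence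

open PowerSeries

variable {𝕜 : Type*} [NormedField 𝕜]

theorem exists_tendsto_and_sub_isBigO_of_sub_isBigO_geometric {E : Type*}
    [SeminormedAddCommGroup E] [CompleteSpace E] {u : ℕ → E} {θ : 𝕜} (hθ0 : θ ≠ 0)
    (hθ : ‖θ‖ < 1) (hu : (fun k => u (k + 1) - u k) =O[atTop] fun k => θ ^ k) :
    ∃ η, Tendsto u atTop (𝓝 η) ∧ (fun k => u k - η) =O[atTop] fun k => θ ^ k := by
  obtain ⟨K, -, hK⟩ := bound_of_isBigO_nat_atTop hu
  have hdist (k : ℕ) : dist (u k) (u (k + 1)) ≤ K * ‖θ‖ ^ k := by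
    rw [dist_comm, dist_eq_norm, ← norm_pow]
    exact hK (pow_ne_zero k hθ0)
  obtain ⟨η, hη⟩ := cauchySeq_tendsto_of_complete (cauchySeq_of_le_geometric _ _ hθ hdist)
  refine ⟨η, hη, isBigO_of_le' (c := K / (1 - ‖θ‖)) _ fun k => ?_⟩
  rw [← dist_eq_norm, norm_pow, div_mul_eq_mul_div]
  exact dist_le_of_le_geometric_of_tendsto _ _ hθ hdist hη k

theorem exists_tendsto_coeff_div_pow [CompleteSpace 𝕜] {f : 𝕜⟦X⟧} {a b : 𝕜} (hb : b ≠ 0)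
    (hba : ‖b‖ < ‖a‖)
    (hf : (fun k => coeff k ((1 - C a * X) * f)) =O[atTop] fun k => b ^ k) :
    ∃ η, Tendsto (fun k => coeff k f / a ^ k) atTop (𝓝 η) ∧
      (fun k => coeff k f - η * a ^ k) =O[atTop] fun k => b ^ k := by
  have ha : a ≠ 0 := norm_pos_iff.mp ((norm_nonneg b).trans_lt hba)
  have hθ : ‖b / a‖ < 1 := by rwa [norm_div, div_lt_one (norm_pos_iff.mpr ha)]
  have hdiff : (fun k => coeff (k + 1) f / a ^ (k + 1) - coeff k f / a ^ k) =O[atTop]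
      fun k => (b / a) ^ k := by
    have hshift : (fun k => coeff (k + 1) ((1 - C a * X) * f) * (a ^ (k + 1))⁻¹) =O[atTop]
        fun k => b ^ (k + 1) * (a ^ (k + 1))⁻¹ :=
      (hf.comp_tendsto (tendsto_add_atTop_nat 1)).mul (isBigO_refl _ _)
    refine (hshift.congr_left fun k => ?_).trans ?_
    · rw [coeff_succ_one_sub_C_mul_X_mul]
      field_simp
      ring
    · refine ((isBigO_refl _ _).const_mul_left (b / a)).congr_left fun k => ?_
      rw [← pow_succ', div_pow, div_eq_mul_inv]
  obtain ⟨η, hη, hO⟩ := exists_tendsto_and_sub_isBigO_of_sub_isBigO_geometric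
    (u := fun k => coeff k f / a ^ k) (div_ne_zero hb ha) hθ hdiff
  refine ⟨η, hη, (hO.mul (isBigO_refl (fun k => a ^ k) atTop)).congr (fun k => ?_) fun k => ?_⟩
  · rw [sub_mul, div_mul_cancel₀ _ (pow_ne_zero k ha)]
  · rw [← mul_pow, div_mul_cancel₀ _ ha]

theorem coeff_isBigO_of_one_sub_C_mul_X_mul_isBigO [CompleteSpace 𝕜] {f : 𝕜⟦X⟧} {a b : 𝕜}
    (hb : b ≠ 0) (hba : ‖b‖ < ‖a‖)
    (hf : (fun k => coeff k ((1 - C a * X) * f)) =O[atTop] fun k => b ^ k) :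
    (fun k => coeff k f) =O[atTop] fun k => a ^ k := by
  obtain ⟨η, -, hO⟩ := exists_tendsto_coeff_div_pow hb hba hf
  have hpow : (fun k => b ^ k) =O[atTop] fun k => a ^ k :=
    isBigO_of_le _ fun k => by
      rw [norm_pow, norm_pow]
      exact pow_le_pow_left₀ (norm_nonneg b) hba.le k
  exact ((hO.trans hpow).add ((isBigO_refl _ _).const_mul_left η)).congr_left fun k =>
    sub_add_cancel _ _

end GeometricConvergence

/-- `q` is the prime that follows the prime `p`. -/
structure ConsecutivePrimes (p q : ℕ) : Prop where
  prime_left : p.Prime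
  prime_right : q.Prime
  lt : p < q
  not_prime_of_between : ∀ r, p < r → r < q → ¬ r.Prime

namespace ConsecutivePrimes

theorem exists_left {q : ℕ} (hq : q.Prime) (hq2 : q ≠ 2) : ∃ p, ConsecutivePrimes p q := by
  have h2q : 2 ≤ q - 1 := by have := hq.two_le; omega
  have hlt : Nat.findGreatest Nat.Prime (q - 1) < q := by
    have := Nat.findGreatest_le (P := Nat.Prime) (q - 1)
    omega
  exact ⟨_, Nat.findGreatest_spec h2q Nat.prime_two, hq, hlt, fun r hr hrq =>
    Nat.findGreatest_is_greatest hr (by omega)⟩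

theorem exists_right {p : ℕ} (hp : p.Prime) : ∃ q, ConsecutivePrimes p q := by
  have h : ∃ q, p < q ∧ q.Prime := Nat.exists_infinite_primes (p + 1)
  exact ⟨Nat.find h, hp, (Nat.find_spec h).2, (Nat.find_spec h).1, fun r hpr hrq hr =>
    Nat.find_min h hrq ⟨hpr, hr⟩⟩

theorem induction {P : ℕ → Prop} (two : P 2) (next : ∀ p q, ConsecutivePrimes p q → P p → P q)
    {q : ℕ} (hq : q.Prime) : P q := by
  induction q using Nat.strong_induction_on with
  | _ q ih =>
    rcases eq_or_ne q 2 with rfl | hq2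
    · exact two
    · obtain ⟨p, hpq⟩ := exists_left hq hq2
      exact next p q hpq (ih p hpq.lt hpq.prime_left)

theorem primesBelow_eq_insert {p q : ℕ} (h : ConsecutivePrimes p q) :
    q.primesBelow = insert p p.primesBelow := by
  ext r
  have := h.not_prime_of_between r
  have := h.lt
  have := h.prime_left
  simp only [Nat.mem_primesBelow, Finset.mem_insert]
  grind

end ConsecutivePrimes

section PrimePowerSums

open PowerSeries

/-- The power sum series `∑_{j ≥ 1} (∑_{r ≥ q} r⁻ʲ) Xʲ`, with `r` running over the primes: the
logarithmic derivative of `∑ₖ c_{k,q} Xᵏ`. For `j = 1` the sum over `r` diverges and is regularised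
by putting `Z(1) = 0`, which leaves `-∑_{r < q} r⁻¹`. A summand `1 - mk (r⁻¹ ^ ·)` is
`-∑_{j ≥ 1} r⁻ʲ Xʲ`. -/
noncomputable def primePowerSumSeries (q : ℕ) : ℝ⟦X⟧ :=
  PowerSeries.mk (fun j => if j < 2 then 0 else Zp j) +
    ∑ r ∈ q.primesBelow, (1 - PowerSeries.mk ((r : ℝ)⁻¹ ^ ·))

theorem primePowerSumSeries_two :
    primePowerSumSeries 2 = PowerSeries.mk fun j => if j < 2 then 0 else Zp j := by
  simp [primePowerSumSeries]

theorem ConsecutivePrimes.primePowerSumSeries_right {p q : ℕ} (h : ConsecutivePrimes p q) :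
    primePowerSumSeries q = (1 - PowerSeries.mk ((p : ℝ)⁻¹ ^ ·)) + primePowerSumSeries p := by
  rw [primePowerSumSeries, h.primesBelow_eq_insert,
    Finset.sum_insert fun hp => (Nat.lt_of_mem_primesBelow hp).false, primePowerSumSeries]
  ring

theorem coeff_zero_primePowerSumSeries (q : ℕ) : coeff 0 (primePowerSumSeries q) = 0 := by
  simp [primePowerSumSeries]

theorem summable_primes_inv_pow {j : ℕ} (hj : 2 ≤ j) :
    Summable fun r : Nat.Primes => ((r : ℕ) : ℝ)⁻¹ ^ j := by
  simp only [inv_pow]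
  exact (Real.summable_nat_pow_inv.mpr hj).comp_injective Subtype.val_injective

theorem coeff_primePowerSumSeries (q : ℕ) {j : ℕ} (hj : 2 ≤ j) :
    coeff j (primePowerSumSeries q) =
      ∑' r : {r : Nat.Primes // q ≤ r}, ((r : ℕ) : ℝ)⁻¹ ^ j := by
  let small : Finset Nat.Primes := q.primesBelow.subtype Nat.Prime
  have hsmall : ∑ r ∈ small, ((r : ℕ) : ℝ)⁻¹ ^ j = ∑ r ∈ q.primesBelow, (r : ℝ)⁻¹ ^ j :=
    Finset.sum_subtype_of_mem (fun r : ℕ => (r : ℝ)⁻¹ ^ j) fun _ => Nat.prime_of_mem_primesBelow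
  have hlarge (r : Nat.Primes) : r ∈ ((small : Set Nat.Primes)ᶜ) ↔ q ≤ r := by
    have hmem : r ∈ small ↔ (r : ℕ) ∈ q.primesBelow := Finset.mem_subtype
    simp [hmem, Nat.mem_primesBelow, r.2]
  have hsplit : Zp j = ∑ r ∈ q.primesBelow, (r : ℝ)⁻¹ ^ j +
      ∑' r : {r : Nat.Primes // q ≤ r}, ((r : ℕ) : ℝ)⁻¹ ^ j := by
    rw [← hsmall, ← (Equiv.subtypeEquivRight hlarge).tsum_eq]
    simp only [Zp, one_div, ← inv_pow]
    exact ((summable_primes_inv_pow hj).sum_add_tsum_compl (s := small)).symm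
  have hfactor (a : ℝ) : coeff j (1 - PowerSeries.mk (a ^ ·)) = -a ^ j := by
    rw [map_sub, coeff_one, if_neg (by omega), coeff_mk, zero_sub]
  rw [primePowerSumSeries, map_add, coeff_mk, if_neg hj.not_gt, map_sum, hsplit]
  simp only [hfactor, Finset.sum_neg_distrib]
  ring

theorem coeff_primePowerSumSeries_isBigO {q : ℕ} (hq : 0 < q) :
    (fun j => coeff j (primePowerSumSeries q)) =O[atTop] fun j => (q : ℝ)⁻¹ ^ j := by
  have hq0 : (0 : ℝ) < q := Nat.cast_pos.mpr hq
  let T : ℝ := ∑' r : {r : Nat.Primes // q ≤ r}, ((r : ℕ) : ℝ)⁻¹ ^ 2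
  refine IsBigO.of_bound (T * (q : ℝ) ^ 2) ?_
  filter_upwards [eventually_ge_atTop 2] with j hj
  obtain ⟨m, rfl⟩ := Nat.exists_eq_add_of_le' hj
  rw [coeff_primePowerSumSeries q hj, Real.norm_of_nonneg (tsum_nonneg fun _ => by positivity),
    Real.norm_of_nonneg (by positivity)]
  calc ∑' r : {r : Nat.Primes // q ≤ r}, ((r : ℕ) : ℝ)⁻¹ ^ (m + 2)
      ≤ (q : ℝ)⁻¹ ^ m * T :=
        tsum_pow_add_le (fun _ => by positivity)
          (fun r => inv_anti₀ hq0 (Nat.cast_le.mpr r.2))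
          ((summable_primes_inv_pow le_rfl).comp_injective Subtype.val_injective) m
    _ = T * (q : ℝ) ^ 2 * (q : ℝ)⁻¹ ^ (m + 2) := by
        rw [pow_add]
        field_simp

end PrimePowerSums

section PrimeSieve

open PowerSeries

variable {F : ℕ → ℝ⟦X⟧}

theorem isEulerLogDeriv_primePowerSumSeries
    (h2 : IsEulerLogDeriv (F 2) (primePowerSumSeries 2))
    (hstep : ∀ p q, ConsecutivePrimes p q → F q = (1 - C (p : ℝ)⁻¹ * X) * F p)
    {q : ℕ} (hq : q.Prime) : IsEulerLogDeriv (F q) (primePowerSumSeries q) := by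
  refine ConsecutivePrimes.induction
    (P := fun q => IsEulerLogDeriv (F q) (primePowerSumSeries q)) h2 (fun p q hpq hp => ?_) hq
  rw [hstep p q hpq, hpq.primePowerSumSeries_right]
  exact (isEulerLogDeriv_one_sub_C_mul_X _).mul hp

theorem coeff_isBigO_inv_prime_pow
    (h2 : IsEulerLogDeriv (F 2) (primePowerSumSeries 2))
    (hstep : ∀ p q, ConsecutivePrimes p q → F q = (1 - C (p : ℝ)⁻¹ * X) * F p)
    {p : ℕ} (hp : p.Prime) : (fun k => coeff k (F p)) =O[atTop] fun k => (p : ℝ)⁻¹ ^ k := by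
  obtain ⟨q, hpq⟩ := ConsecutivePrimes.exists_right hp
  have hp0 : (0 : ℝ) < p := Nat.cast_pos.mpr hp.pos
  have hlt : (q : ℝ)⁻¹ < (p : ℝ)⁻¹ := inv_strictAnti₀ hp0 (Nat.cast_lt.mpr hpq.lt)
  obtain ⟨b, hqb, hbp⟩ := exists_between hlt
  have hq0 : 0 ≤ (q : ℝ)⁻¹ := by positivity
  have hb0 : 0 < b := hq0.trans_lt hqb
  have hFq : (fun k => coeff k (F q)) =O[atTop] fun k => b ^ k :=
    (isEulerLogDeriv_primePowerSumSeries h2 hstep hpq.prime_right).coeff_isBigO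
      (coeff_zero_primePowerSumSeries q) (coeff_primePowerSumSeries_isBigO hpq.prime_right.pos)
      (norm_lt_norm_of_nonneg_of_lt hq0 hqb)
  rw [hstep p q hpq] at hFq
  exact coeff_isBigO_of_one_sub_C_mul_X_mul_isBigO hb0.ne'
    (norm_lt_norm_of_nonneg_of_lt hb0.le hbp) hFq

theorem exists_tendsto_coeff_mul_prime_pow
    (h2 : IsEulerLogDeriv (F 2) (primePowerSumSeries 2))
    (hstep : ∀ p q, ConsecutivePrimes p q → F q = (1 - C (p : ℝ)⁻¹ * X) * F p)
    {p q : ℕ} (hpq : ConsecutivePrimes p q) :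
    ∃ η : ℝ, Tendsto (fun k => coeff k (F p) * (p : ℝ) ^ k) atTop (𝓝 η) ∧
      (fun k => coeff k (F p) - η / (p : ℝ) ^ k) =O[atTop] fun k => ((q : ℝ) ^ k)⁻¹ := by
  have hp0 : (0 : ℝ) < p := Nat.cast_pos.mpr hpq.prime_left.pos
  have hlt : (p : ℝ) < q := Nat.cast_lt.mpr hpq.lt
  have hq0 : 0 < (q : ℝ)⁻¹ := inv_pos.mpr (hp0.trans hlt)
  have hFq := coeff_isBigO_inv_prime_pow h2 hstep hpq.prime_right
  rw [hstep p q hpq] at hFq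
  simpa [div_eq_mul_inv] using exists_tendsto_coeff_div_pow hq0.ne'
    (norm_lt_norm_of_nonneg_of_lt hq0.le (inv_strictAnti₀ hp0 hlt)) hFq

end PrimeSieve

theorem eta_p_exists (c : ℕ → ℝ) (hc0 : c 0 = 1)
    (hc : ∀ k, 1 ≤ k → c k = (1 / (k : ℝ)) * ∑ j ∈ Finset.Icc 2 k, c (k - j) * Zp j)
    (C : ℕ → ℕ → ℝ) (hC2 : ∀ k, C k 2 = c k)
    (hCstep : ∀ p q : ℕ, p.Prime → q.Prime → p < q → (∀ r, p < r → r < q → ¬ r.Prime) →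
      C 0 q = 1 ∧ ∀ k, 1 ≤ k → C k q = C k p - (1 / (p : ℝ)) * C (k - 1) p) :
    ∀ p q : ℕ, p.Prime → q.Prime → p < q → (∀ r, p < r → r < q → ¬ r.Prime) →
      ∃ η : ℝ, Tendsto (fun k : ℕ => C k p * (p : ℝ) ^ k) atTop (nhds η)
        ∧ (fun k : ℕ => C k p - η / (p : ℝ) ^ k) =O[atTop] fun k : ℕ => ((q : ℝ) ^ k)⁻¹ := by
  have hC0 : ∀ q : ℕ, q.Prime → C 0 q = 1 := fun q hq =>
    ConsecutivePrimes.induction (P := fun q => C 0 q = 1) ((hC2 0).trans hc0)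
      (fun p q h _ => (hCstep p q h.prime_left h.prime_right h.lt h.not_prime_of_between).1) hq
  have h2 : IsEulerLogDeriv (PowerSeries.mk fun k => C k 2) (primePowerSumSeries 2) := by
    simp only [hC2, primePowerSumSeries_two]
    exact isEulerLogDeriv_mk_of_recurrence two_pos hc
  have hstep : ∀ p q, ConsecutivePrimes p q → PowerSeries.mk (fun k => C k q) =
      (1 - PowerSeries.C (p : ℝ)⁻¹ * PowerSeries.X) * PowerSeries.mk fun k => C k p := by
    intro p q h
    refine mk_eq_one_sub_C_mul_X_mul_mk
      ((hC0 q h.prime_right).trans (hC0 p h.prime_left).symm) fun k => ?_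
    obtain ⟨-, hC⟩ := hCstep p q h.prime_left h.prime_right h.lt h.not_prime_of_between
    simpa using hC (k + 1) (Nat.le_add_left 1 k)
  intro p q hp hq hlt hbetween
  simpa only [PowerSeries.coeff_mk] using exists_tendsto_coeff_mul_prime_pow
    (F := fun q => PowerSeries.mk fun k => C k q) h2 hstep ⟨hp, hq, hlt, hbetween⟩
end

section
/- For each prime p, the coefficient η_p = lim_{k→∞} c_{k,p} p^k equals exp(-∑_{q ≤ p} p/q) · ∏_{q > p} (1 - p/q)^{-1} e^{-p/q}, where q runs over primes; the infinite product converges. -/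
open Filter Real Asymptotics
open scoped Classical Topology BigOperators

/-!
Multiplying `∑ c_k Xᵏ = exp (∑_{j ≥ 2} Z(j) Xʲ / j)` by `1 - X / q` for all primes `q ≤ p` gives the
formal identity
`(1 - X / p) * ∑ c_{k,p} Xᵏ = exp (-∑_{q ≤ p} X / q - ∑_{q > p} (log (1 - X / q) + X / q))`.
At `X = p` the exponent converges absolutely, because `p / q ≤ p / (p + 1) < 1` for `q > p` and
`∑ 1 / q²` converges, and the exponential of an absolutely convergent series converges absolutely.
The partial sums of the left-hand side at `X = p` telescope to `c_{k,p} pᵏ`, so the limit exists and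
is the exponential of the value of the exponent.
-/

section

open PowerSeries hiding C exp mk

section FormalLogarithms

variable {K : Type*} [Field K]

/-- The formal power series of `log (1 - aX)`; its constant coefficient `-a⁰ / 0` is `0`. -/
def logOneSub (a : K) : K⟦X⟧ := PowerSeries.mk fun n ↦ -(a ^ n / n)

theorem constantCoeff_logOneSub (a : K) : constantCoeff (logOneSub a) = 0 := by
  simp [logOneSub, ← coeff_zero_eq_constantCoeff_apply]

/-- The series `∑_{j ≥ 2} z_j Xʲ / j`, the logarithm of the generating function of the sequence with
`c_0 = 1` and `k c_k = ∑_{j=2}^k c_{k-j} z_j`. -/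
def newtonSeries (z : ℕ → K) : K⟦X⟧ := PowerSeries.mk fun j ↦ if j < 2 then 0 else z j / j

theorem constantCoeff_newtonSeries (z : ℕ → K) : constantCoeff (newtonSeries z) = 0 := by
  simp [newtonSeries]

end FormalLogarithms

section FormalExp

variable {K : Type*} [Field K] [CharZero K] {F L M : K⟦X⟧}

/-- The formal exponential `exp(L) = ∑ Lᵏ / k!`. It is meaningful when `L` has zero constant
coefficient, as substitution takes junk values for most other `L`. -/
noncomputable def formalExp (L : K⟦X⟧) : K⟦X⟧ := (PowerSeries.exp K).subst L

theorem derivative_formalExp (hL : constantCoeff L = 0) :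
    d⁄dX K (formalExp L) = formalExp L * d⁄dX K L := by
  rw [formalExp, derivative_subst (HasSubst.of_constantCoeff_zero' hL), derivative_exp]

theorem constantCoeff_formalExp (hL : constantCoeff L = 0) :
    constantCoeff (formalExp L) = 1 := by
  rw [← coeff_zero_eq_constantCoeff_apply, formalExp,
    coeff_subst' (HasSubst.of_constantCoeff_zero' hL), finsum_eq_single _ 0]
  · simp
  · intro n hn
    simp [hL, hn]

theorem eq_formalExp_of_derivative_eq (hF : constantCoeff F = 1) (hL : constantCoeff L = 0)
    (h : d⁄dX K F = F * d⁄dX K L) : F = formalExp L := by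
  have hE : constantCoeff (formalExp L) = 1 := constantCoeff_formalExp hL
  have hE_ne : constantCoeff (formalExp L) ≠ 0 := hE ▸ one_ne_zero
  suffices F * (formalExp L)⁻¹ = 1 by
    exact ((PowerSeries.eq_mul_inv_iff_mul_eq hE_ne).mp this.symm).symm.trans (one_mul _)
  refine derivative.ext ?_ (by simp [hF, hE])
  have hcancel : formalExp L * (formalExp L)⁻¹ = 1 := PowerSeries.mul_inv_cancel _ hE_ne
  rw [Derivation.leibniz, derivative_inv', derivative_formalExp hL, h, derivative_one]
  simp only [smul_eq_mul]
  linear_combination (-F * (formalExp L)⁻¹ * d⁄dX K L) * hcancel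

theorem formalExp_add (hL : constantCoeff L = 0) (hM : constantCoeff M = 0) :
    formalExp (L + M) = formalExp L * formalExp M := by
  refine (eq_formalExp_of_derivative_eq ?_ (by simp [hL, hM]) ?_).symm
  · simp [constantCoeff_formalExp, hL, hM]
  · rw [Derivation.leibniz, derivative_formalExp hL, derivative_formalExp hM, map_add]
    simp only [smul_eq_mul]
    ring

theorem formalExp_sum {ι : Type*} (s : Finset ι) (f : ι → K⟦X⟧)
    (hf : ∀ i ∈ s, constantCoeff (f i) = 0) :
    formalExp (∑ i ∈ s, f i) = ∏ i ∈ s, formalExp (f i) := by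
  induction s using Finset.induction_on with
  | empty =>
    exact (eq_formalExp_of_derivative_eq (by simp) (by simp) (by simp)).symm
  | insert i s hi ih =>
    obtain ⟨hi0, hs0⟩ := Finset.forall_mem_insert _ _ _ |>.mp hf
    have hsum0 : constantCoeff (∑ j ∈ s, f j) = 0 := by
      rw [map_sum, Finset.sum_eq_zero hs0]
    rw [Finset.sum_insert hi, Finset.prod_insert hi, formalExp_add hi0 hsum0, ih hs0]

theorem formalExp_logOneSub (a : K) : formalExp (logOneSub a) = 1 - PowerSeries.C a * X := by
  refine (eq_formalExp_of_derivative_eq (by simp) (constantCoeff_logOneSub a) ?_).symm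
  have hderiv : d⁄dX K (logOneSub a) = -PowerSeries.mk fun n ↦ a ^ (n + 1) := by
    ext n
    have : (n + 1 : K) ≠ 0 := n.cast_add_one_ne_zero
    simp only [logOneSub, coeff_derivative, coeff_mk, map_neg, Nat.cast_add_one]
    field_simp
  rw [hderiv]
  ext n
  cases n with
  | zero => simp [sub_mul, mul_assoc]
  | succ n => simp [sub_mul, mul_assoc, coeff_succ_X_mul, pow_succ']

theorem mk_eq_formalExp_newtonSeries {c z : ℕ → K} (hc0 : c 0 = 1)
    (hc : ∀ k, 1 ≤ k → c k = (1 / (k : K)) * ∑ j ∈ Finset.Icc 2 k, c (k - j) * z j) :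
    PowerSeries.mk c = formalExp (newtonSeries z) := by
  refine eq_formalExp_of_derivative_eq (by simpa) (constantCoeff_newtonSeries z) ?_
  have hderiv : d⁄dX K (newtonSeries z) =
      PowerSeries.mk fun j ↦ if j = 0 then 0 else z (j + 1) := by
    ext j
    have hj : ((j + 1 : ℕ) : K) ≠ 0 := Nat.cast_ne_zero.mpr j.succ_ne_zero
    rcases eq_or_ne j 0 with rfl | hj0
    · simp [newtonSeries, coeff_derivative]
    · rw [coeff_derivative, newtonSeries, coeff_mk, coeff_mk, if_neg (by omega), if_neg hj0,
        ← Nat.cast_add_one, div_mul_cancel₀ _ hj]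
  rw [hderiv]
  ext n
  have hn : (n + 1 : K) ≠ 0 := n.cast_add_one_ne_zero
  rw [coeff_derivative, coeff_mk, hc (n + 1) (by omega), coeff_mul,
    ← Finset.Nat.sum_antidiagonal_swap, Finset.Nat.sum_antidiagonal_eq_sum_range_succ_mk,
    Finset.sum_range_succ', ← Finset.Ico_add_one_right_eq_Icc, Finset.sum_Ico_eq_sum_range]
  simp only [Prod.swap, coeff_mk, if_true, mul_zero, add_zero, Nat.add_eq_zero_iff, one_ne_zero,
    and_false, if_false, Nat.cast_add_one]
  rw [mul_right_comm, one_div_mul_cancel hn, one_mul]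
  refine Finset.sum_congr (by simp) fun i _ ↦ ?_
  rw [show n + 1 - (2 + i) = n - (i + 1) by omega, show 2 + i = i + 1 + 1 by omega]

end FormalExp

section Summation

variable {𝕜 : Type*} [RCLike 𝕜] {F G L : 𝕜⟦X⟧} {x : 𝕜}

theorem coeff_mul_mul_pow {R : Type*} [CommRing R] (F G : R⟦X⟧) (x : R) (n : ℕ) :
    coeff n (F * G) * x ^ n =
      ∑ ij ∈ Finset.HasAntidiagonal.antidiagonal n,
        coeff ij.1 F * x ^ ij.1 * (coeff ij.2 G * x ^ ij.2) := by
  rw [coeff_mul, Finset.sum_mul]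
  refine Finset.sum_congr rfl fun ij hij ↦ ?_
  rw [← Finset.HasAntidiagonal.mem_antidiagonal.mp hij, pow_add]
  ring

theorem summable_norm_coeff_mul (hF : Summable fun n ↦ ‖coeff n F * x ^ n‖)
    (hG : Summable fun n ↦ ‖coeff n G * x ^ n‖) :
    Summable fun n ↦ ‖coeff n (F * G) * x ^ n‖ := by
  simpa only [coeff_mul_mul_pow] using summable_norm_sum_mul_antidiagonal_of_summable_norm hF hG

theorem tsum_coeff_mul (hF : Summable fun n ↦ ‖coeff n F * x ^ n‖)
    (hG : Summable fun n ↦ ‖coeff n G * x ^ n‖) :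
    ∑' n, coeff n (F * G) * x ^ n = (∑' n, coeff n F * x ^ n) * ∑' n, coeff n G * x ^ n := by
  simpa only [coeff_mul_mul_pow] using
    (tsum_mul_tsum_eq_tsum_sum_antidiagonal_of_summable_norm hF hG).symm

theorem tsum_norm_coeff_mul_le (hF : Summable fun n ↦ ‖coeff n F * x ^ n‖)
    (hG : Summable fun n ↦ ‖coeff n G * x ^ n‖) :
    ∑' n, ‖coeff n (F * G) * x ^ n‖ ≤
      (∑' n, ‖coeff n F * x ^ n‖) * ∑' n, ‖coeff n G * x ^ n‖ := by
  have hF' : Summable fun n ↦ ‖‖coeff n F * x ^ n‖‖ := by simpa only [norm_norm]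
  have hG' : Summable fun n ↦ ‖‖coeff n G * x ^ n‖‖ := by simpa only [norm_norm]
  rw [tsum_mul_tsum_eq_tsum_sum_antidiagonal_of_summable_norm hF' hG']
  refine (summable_norm_coeff_mul hF hG).tsum_le_tsum (fun n ↦ ?_)
    (summable_norm_sum_mul_antidiagonal_of_summable_norm hF' hG').of_norm
  rw [coeff_mul_mul_pow]
  exact (norm_sum_le _ _).trans_eq (by simp only [norm_mul])

theorem summable_norm_coeff_one : Summable fun n ↦ ‖coeff n (1 : 𝕜⟦X⟧) * x ^ n‖ :=
  summable_of_ne_finset_zero (s := {0}) fun n hn ↦ by simp_all [coeff_one]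

theorem summable_norm_coeff_pow (hL : Summable fun n ↦ ‖coeff n L * x ^ n‖) (k : ℕ) :
    Summable fun n ↦ ‖coeff n (L ^ k) * x ^ n‖ := by
  induction k with
  | zero => simpa only [pow_zero] using summable_norm_coeff_one
  | succ k ih => simpa only [pow_succ] using summable_norm_coeff_mul ih hL

theorem tsum_coeff_pow (hL : Summable fun n ↦ ‖coeff n L * x ^ n‖) (k : ℕ) :
    ∑' n, coeff n (L ^ k) * x ^ n = (∑' n, coeff n L * x ^ n) ^ k := by
  induction k with
  | zero => simp [coeff_one]
  | succ k ih => rw [pow_succ, tsum_coeff_mul (summable_norm_coeff_pow hL k) hL, ih, pow_succ]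

theorem tsum_norm_coeff_pow_le (hL : Summable fun n ↦ ‖coeff n L * x ^ n‖) (k : ℕ) :
    ∑' n, ‖coeff n (L ^ k) * x ^ n‖ ≤ (∑' n, ‖coeff n L * x ^ n‖) ^ k := by
  induction k with
  | zero =>
    rw [tsum_eq_single 0 (by simp +contextual [coeff_one])]
    simp
  | succ k ih =>
    rw [pow_succ, pow_succ]
    refine (tsum_norm_coeff_mul_le (summable_norm_coeff_pow hL k) hL).trans ?_
    exact mul_le_mul_of_nonneg_right ih (tsum_nonneg fun _ ↦ norm_nonneg _)

theorem summable_coeff_pow_div_factorial (hL : Summable fun n ↦ ‖coeff n L * x ^ n‖) :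
    Summable fun kn : ℕ × ℕ ↦ coeff kn.2 (L ^ kn.1) * x ^ kn.2 / kn.1.factorial := by
  refine Summable.of_norm ?_
  simp only [norm_div, RCLike.norm_natCast]
  rw [summable_prod_of_nonneg fun _ ↦ div_nonneg (norm_nonneg _) (Nat.cast_nonneg _)]
  refine ⟨fun k ↦ (summable_norm_coeff_pow hL k).div_const (k.factorial : ℝ), ?_⟩
  simp only [tsum_div_const]
  refine (Real.summable_pow_div_factorial (∑' n, ‖coeff n L * x ^ n‖)).of_nonneg_of_le
    (fun k ↦ by positivity) fun k ↦ ?_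
  exact div_le_div_of_nonneg_right (tsum_norm_coeff_pow_le hL k) (Nat.cast_nonneg _)

theorem hasSum_coeff_pow_div_factorial (hL0 : constantCoeff L = 0) (n : ℕ) :
    HasSum (fun k ↦ coeff n (L ^ k) * x ^ n / k.factorial) (coeff n (formalExp L) * x ^ n) := by
  have hsubst := HasSubst.of_constantCoeff_zero' hL0
  have hfin := coeff_subst_finite' hsubst (PowerSeries.exp 𝕜) n
  rw [formalExp, coeff_subst' hsubst, ← tsum_eq_finsum (L := .unconditional ℕ) hfin]
  have hterm (k : ℕ) : coeff n (L ^ k) * x ^ n / k.factorial =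
      coeff k (PowerSeries.exp 𝕜) • coeff n (L ^ k) * x ^ n := by
    simp only [coeff_exp, map_div₀, map_one, map_natCast, smul_eq_mul]
    ring
  simp only [hterm]
  exact (summable_of_hasFiniteSupport hfin).hasSum.mul_right (x ^ n)

theorem hasSum_coeff_formalExp (hL0 : constantCoeff L = 0)
    (hL : Summable fun n ↦ ‖coeff n L * x ^ n‖) :
    HasSum (fun n ↦ coeff n (formalExp L) * x ^ n)
      (NormedSpace.exp (∑' n, coeff n L * x ^ n)) := by
  have hdouble := (summable_coeff_pow_div_factorial hL).hasSum
  have hrows : HasSum (fun k ↦ (∑' n, coeff n L * x ^ n) ^ k / (k.factorial : 𝕜))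
      (∑' kn : ℕ × ℕ, coeff kn.2 (L ^ kn.1) * x ^ kn.2 / kn.1.factorial) := by
    refine hdouble.prod_fiberwise fun k ↦ ?_
    rw [← tsum_coeff_pow hL]
    exact (summable_norm_coeff_pow hL k).of_norm.hasSum.div_const _
  rw [(NormedSpace.expSeries_div_hasSum_exp _).unique hrows]
  exact ((Equiv.prodComm ℕ ℕ).hasSum_iff.mpr hdouble).prod_fiberwise
    (hasSum_coeff_pow_div_factorial hL0)

end Summation

section LinearFactors

variable {K : Type*} [Field K]

theorem coeff_zero_mul_one_sub (F : K⟦X⟧) (a : K) :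
    coeff 0 (F * (1 - PowerSeries.C a * X)) = coeff 0 F := by
  simp

theorem coeff_succ_mul_one_sub (F : K⟦X⟧) (a : K) (n : ℕ) :
    coeff (n + 1) (F * (1 - PowerSeries.C a * X)) = coeff (n + 1) F - a * coeff n F := by
  rw [mul_sub, mul_one, mul_left_comm, map_sub, coeff_C_mul, coeff_succ_mul_X]

theorem mk_eq_mul_one_sub {f g : ℕ → K} {a : K} (h0 : g 0 = f 0)
    (hstep : ∀ k, 1 ≤ k → g k = f k - a * f (k - 1)) :
    PowerSeries.mk g = PowerSeries.mk f * (1 - PowerSeries.C a * X) := by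
  ext (_ | n)
  · simpa only [coeff_zero_mul_one_sub, coeff_mk]
  · rw [coeff_succ_mul_one_sub, coeff_mk, coeff_mk, coeff_mk, hstep (n + 1) n.succ_pos,
      Nat.add_sub_cancel]

theorem sum_range_coeff_mul_one_sub_inv (f : ℕ → K) {x : K} (hx : x ≠ 0) (n : ℕ) :
    ∑ i ∈ Finset.range (n + 1),
      coeff i (PowerSeries.mk f * (1 - PowerSeries.C x⁻¹ * X)) * x ^ i = f n * x ^ n := by
  induction n with
  | zero => simp
  | succ n ih =>
    rw [Finset.sum_range_succ, ih, coeff_succ_mul_one_sub, coeff_mk, coeff_mk]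
    field_simp
    ring

end LinearFactors

section ConsecutivePrimes

theorem exists_prev_prime {q : ℕ} (hq : q.Prime) (hq2 : q ≠ 2) :
    ∃ p, p.Prime ∧ p < q ∧ ∀ r, p < r → r < q → ¬ r.Prime := by
  have hne : q.primesBelow.Nonempty :=
    ⟨2, Nat.mem_primesBelow.mpr ⟨hq.two_le.lt_of_ne' hq2, Nat.prime_two⟩⟩
  have hmem := Nat.mem_primesBelow.mp (q.primesBelow.max'_mem hne)
  refine ⟨_, hmem.2, hmem.1, fun r hr hrq hprime ↦ hr.not_ge ?_⟩
  exact q.primesBelow.le_max' r (Nat.mem_primesBelow.mpr ⟨hrq, hprime⟩)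

theorem primesBelow_eq_primesBelow_succ {p q : ℕ} (hpq : p < q)
    (hgap : ∀ r, p < r → r < q → ¬ r.Prime) : q.primesBelow = (p + 1).primesBelow := by
  ext r
  simp only [Nat.mem_primesBelow]
  grind

theorem prod_primesBelow_succ {M : Type*} [CommMonoid M] {p : ℕ} (hp : p.Prime) (f : ℕ → M) :
    ∏ r ∈ (p + 1).primesBelow, f r = (∏ r ∈ p.primesBelow, f r) * f p := by
  rw [Nat.primesBelow_succ, if_pos hp, Finset.prod_insert p.notMem_primesBelow, mul_comm]

theorem mk_eq_mul_prod_primesBelow {K : Type*} [Field K] {C : ℕ → ℕ → K} (hC2 : C 0 2 = 1)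
    (hCstep : ∀ p q : ℕ, p.Prime → q.Prime → p < q → (∀ r, p < r → r < q → ¬ r.Prime) →
      C 0 q = 1 ∧ ∀ k, 1 ≤ k → C k q = C k p - (1 / (p : K)) * C (k - 1) p)
    {p : ℕ} (hp : p.Prime) :
    PowerSeries.mk (C · p) = PowerSeries.mk (C · 2) *
      ∏ r ∈ p.primesBelow, (1 - PowerSeries.C (r : K)⁻¹ * X) := by
  induction p using Nat.strong_induction_on with
  | _ q ih =>
    obtain rfl | hq2 := eq_or_ne q 2
    · simp
    obtain ⟨m, hm, hmq, hgap⟩ := exists_prev_prime hp hq2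
    obtain ⟨hq0, hstep⟩ := hCstep m q hm hp hmq hgap
    have hm0 : C 0 m = 1 := by
      simpa [hC2] using congrArg constantCoeff (ih m hmq hm)
    have hlast : PowerSeries.mk (C · q) =
        PowerSeries.mk (C · m) * (1 - PowerSeries.C (m : K)⁻¹ * X) :=
      mk_eq_mul_one_sub (hq0.trans hm0.symm) (by simpa only [one_div] using hstep)
    rw [hlast, ih m hmq hm, mul_assoc, ← prod_primesBelow_succ hm,
      primesBelow_eq_primesBelow_succ hmq hgap]

end ConsecutivePrimes

section ConvergenceFactors

variable {ι : Type*} {t : ι → ℝ} {ρ : ℝ}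

theorem summable_pow_add_two_div (hρ : ρ < 1) (ht : ∀ i, |t i| ≤ ρ)
    (hsq : Summable fun i ↦ t i ^ 2) :
    Summable fun ij : ι × ℕ ↦ t ij.1 ^ (ij.2 + 2) / ((ij.2 : ℝ) + 2) := by
  obtain hι | ⟨⟨i₀⟩⟩ := isEmpty_or_nonempty ι
  · exact summable_empty
  have hρ0 : 0 ≤ ρ := (abs_nonneg _).trans (ht i₀)
  have hmajorant : Summable fun ij : ι × ℕ ↦ t ij.1 ^ 2 * ρ ^ ij.2 :=
    hsq.mul_of_nonneg (summable_geometric_of_lt_one hρ0 hρ) (fun _ ↦ sq_nonneg _)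
      (fun j ↦ pow_nonneg hρ0 j)
  refine hmajorant.of_norm_bounded fun ⟨i, j⟩ ↦ ?_
  calc ‖t i ^ (j + 2) / ((j : ℝ) + 2)‖
      = |t i| ^ (j + 2) / ((j : ℝ) + 2) := by
        rw [norm_div, norm_pow, Real.norm_eq_abs, Real.norm_of_nonneg (by positivity)]
    _ ≤ |t i| ^ (j + 2) := div_le_self (by positivity) (by linarith [j.cast_nonneg (α := ℝ)])
    _ = t i ^ 2 * |t i| ^ j := by rw [pow_add, sq_abs, mul_comm]
    _ ≤ t i ^ 2 * ρ ^ j := by gcongr; exact ht i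

theorem hasSum_pow_add_two_div {x : ℝ} (hx : |x| < 1) :
    HasSum (fun j : ℕ ↦ x ^ (j + 2) / ((j : ℝ) + 2)) (-Real.log (1 - x) - x) := by
  have h := (hasSum_nat_add_iff' 1).mpr (Real.hasSum_pow_div_log_of_abs_lt_one hx)
  simp only [Finset.sum_range_one, zero_add, pow_one, Nat.cast_zero, div_one] at h
  refine h.congr_fun fun j ↦ ?_
  push_cast
  ring

theorem hasSum_neg_log_one_sub_sub (hρ : ρ < 1) (ht : ∀ i, |t i| ≤ ρ)
    (hsq : Summable fun i ↦ t i ^ 2) :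
    HasSum (fun i ↦ -Real.log (1 - t i) - t i)
      (∑' ij : ι × ℕ, t ij.1 ^ (ij.2 + 2) / ((ij.2 : ℝ) + 2)) := by
  have hrow (i : ι) := hasSum_pow_add_two_div ((ht i).trans_lt hρ)
  exact (summable_pow_add_two_div hρ ht hsq).hasSum.prod_fiberwise hrow

theorem hasSum_tsum_pow_add_two_div (hρ : ρ < 1) (ht : ∀ i, |t i| ≤ ρ)
    (hsq : Summable fun i ↦ t i ^ 2) :
    HasSum (fun j : ℕ ↦ ∑' i, t i ^ (j + 2) / ((j : ℝ) + 2))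
      (∑' i, (-Real.log (1 - t i) - t i)) := by
  rw [(hasSum_neg_log_one_sub_sub hρ ht hsq).tsum_eq]
  have hswap := (Equiv.prodComm ℕ ι).hasSum_iff.mpr (summable_pow_add_two_div hρ ht hsq).hasSum
  refine hswap.prod_fiberwise fun j ↦ ?_
  exact (hswap.summable.prod_factor j).hasSum

theorem hasProd_inv_one_sub_mul_exp_neg (hρ : ρ < 1) (ht : ∀ i, |t i| ≤ ρ)
    (hsq : Summable fun i ↦ t i ^ 2) :
    HasProd (fun i ↦ (1 - t i)⁻¹ * Real.exp (-t i))
      (Real.exp (∑' i, (-Real.log (1 - t i) - t i))) := by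
  convert (hasSum_neg_log_one_sub_sub hρ ht hsq).summable.hasSum.rexp using 2 with i
  have hpos : 0 < 1 - t i := by linarith [le_abs_self (t i), ht i]
  rw [Function.comp_apply, sub_eq_add_neg (-Real.log _), Real.exp_add, Real.exp_neg (Real.log _),
    Real.exp_log hpos]

end ConvergenceFactors

section EtaCoefficient

/-- The primes exceeding `n`, spelled as a subtype of `Nat.Primes`. -/
abbrev PrimesGT (n : ℕ) : Type := {q : Nat.Primes // n < (q : ℕ)}

theorem sum_primesBelow_add_tsum_primesGT {f : ℕ → ℝ} (hf : Summable fun q : Nat.Primes ↦ f q)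
    (n : ℕ) :
    ∑ r ∈ (n + 1).primesBelow, f r + ∑' q : PrimesGT n, f q.1 = ∑' q : Nat.Primes, f q := by
  have hmem (q : Nat.Primes) : q ∈ (n + 1).primesBelow.subtype Nat.Prime ↔ ¬ n < (q : ℕ) := by
    refine (Finset.mem_subtype.trans Nat.mem_primesBelow).trans ?_
    rw [and_iff_left q.2, Nat.lt_add_one_iff, not_lt]
  have hinit : ∑ r ∈ (n + 1).primesBelow, f r =
      ∑ q ∈ (n + 1).primesBelow.subtype Nat.Prime, f q := by
    rw [Finset.sum_subtype_eq_sum_filter, Finset.filter_true_of_mem]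
    exact fun r hr ↦ Nat.prime_of_mem_primesBelow hr
  have htail := (Equiv.subtypeEquivRight fun q ↦ (not_congr (hmem q)).trans not_not).tsum_eq
    fun q : PrimesGT n ↦ f q.1
  rw [hinit, ← htail]
  exact hf.sum_add_tsum_subtype_compl _

theorem summable_primes_inv_pow_s13 {k : ℕ} (hk : 1 < k) :
    Summable fun q : Nat.Primes ↦ ((q : ℕ) : ℝ)⁻¹ ^ k := by
  refine (Nat.Primes.summable_rpow.mpr (?_ : (-k : ℝ) < -1)).congr fun q ↦ ?_
  · exact neg_lt_neg (by exact_mod_cast hk)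
  · rw [Real.rpow_neg (Nat.cast_nonneg _), Real.rpow_natCast, inv_pow]

theorem Zp_sub_sum_primesBelow {k : ℕ} (hk : 1 < k) (n : ℕ) :
    Zp k - ∑ r ∈ (n + 1).primesBelow, (r : ℝ)⁻¹ ^ k =
      ∑' q : PrimesGT n, ((q.1 : ℕ) : ℝ)⁻¹ ^ k := by
  have hsplit := sum_primesBelow_add_tsum_primesGT (f := fun q ↦ (q : ℝ)⁻¹ ^ k)
    (summable_primes_inv_pow_s13 hk) n
  have hZp : Zp k = ∑' q : Nat.Primes, ((q : ℕ) : ℝ)⁻¹ ^ k := by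
    simp only [Zp, one_div, inv_pow]
  rw [hZp, ← hsplit, add_sub_cancel_left]

/-- The formal logarithm of `(1 - X / p) * ∑ c_{k,p} Xᵏ`, namely
`-∑_{q ≤ p} X / q - ∑_{q > p} (log (1 - X / q) + X / q)` over primes `q`, presented as
`∑_{j ≥ 2} Z(j) Xʲ / j + ∑_{q ≤ p} log (1 - X / q)`. -/
noncomputable def etaExponent (p : ℕ) : ℝ⟦X⟧ :=
  newtonSeries Zp + ∑ r ∈ (p + 1).primesBelow, logOneSub (r : ℝ)⁻¹

theorem constantCoeff_etaExponent (p : ℕ) : constantCoeff (etaExponent p) = 0 := by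
  simp [etaExponent, constantCoeff_newtonSeries, constantCoeff_logOneSub]

theorem coeff_etaExponent_one (p : ℕ) :
    coeff 1 (etaExponent p) = -∑ r ∈ (p + 1).primesBelow, (r : ℝ)⁻¹ := by
  simp [etaExponent, newtonSeries, logOneSub]

theorem coeff_etaExponent_add_two (p j : ℕ) :
    coeff (j + 2) (etaExponent p) =
      (∑' q : PrimesGT p, ((q.1 : ℕ) : ℝ)⁻¹ ^ (j + 2)) / ((j : ℝ) + 2) := by
  rw [← Zp_sub_sum_primesBelow (by omega), sub_div, Finset.sum_div]
  simp [etaExponent, newtonSeries, logOneSub, sub_eq_add_neg]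

theorem abs_div_primesGT_le (p : ℕ) (q : PrimesGT p) :
    |(p : ℝ) / ((q.1 : ℕ) : ℝ)| ≤ p / (p + 1) := by
  have hq : (p : ℝ) + 1 ≤ ((q.1 : ℕ) : ℝ) := by exact_mod_cast q.2
  rw [abs_of_nonneg (by positivity)]
  gcongr

theorem div_add_one_lt_one (p : ℕ) : (p : ℝ) / (p + 1) < 1 :=
  (div_lt_one (by positivity)).mpr (lt_add_one _)

theorem summable_div_primesGT_sq (p : ℕ) :
    Summable fun q : PrimesGT p ↦ ((p : ℝ) / ((q.1 : ℕ) : ℝ)) ^ 2 := by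
  simp only [div_eq_mul_inv, mul_pow]
  exact ((summable_primes_inv_pow_s13 one_lt_two).subtype {q : Nat.Primes | p < (q : ℕ)}).mul_left _

theorem hasSum_etaExponent (p : ℕ) :
    HasSum (fun n ↦ coeff n (etaExponent p) * (p : ℝ) ^ n)
      (-∑ r ∈ (p + 1).primesBelow, (p : ℝ) / r + ∑' q : PrimesGT p,
        (-Real.log (1 - (p : ℝ) / ((q.1 : ℕ) : ℝ)) - (p : ℝ) / ((q.1 : ℕ) : ℝ))) := by
  have htail := hasSum_tsum_pow_add_two_div (div_add_one_lt_one p) (abs_div_primesGT_le p)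
    (summable_div_primesGT_sq p)
  have hterm (j : ℕ) : coeff (j + 2) (etaExponent p) * (p : ℝ) ^ (j + 2) =
      ∑' q : PrimesGT p, ((p : ℝ) / ((q.1 : ℕ) : ℝ)) ^ (j + 2) / ((j : ℝ) + 2) := by
    rw [coeff_etaExponent_add_two, tsum_div_const, div_mul_eq_mul_div, ← tsum_mul_right]
    simp only [div_eq_inv_mul (p : ℝ), mul_pow]
  have hinit : ∑ n ∈ Finset.range 2, coeff n (etaExponent p) * (p : ℝ) ^ n =
      -∑ r ∈ (p + 1).primesBelow, (p : ℝ) / r := by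
    simp [Finset.sum_range_succ, constantCoeff_etaExponent, coeff_etaExponent_one,
      Finset.sum_mul, div_eq_inv_mul]
  rw [← hasSum_nat_add_iff' 2, hinit, add_sub_cancel_left]
  simpa only [hterm] using htail

theorem mk_mul_one_sub_eq_formalExp_etaExponent {c : ℕ → ℝ} (hc0 : c 0 = 1)
    (hc : ∀ k, 1 ≤ k → c k = (1 / (k : ℝ)) * ∑ j ∈ Finset.Icc 2 k, c (k - j) * Zp j)
    {C : ℕ → ℕ → ℝ} (hC2 : ∀ k, C k 2 = c k)
    (hCstep : ∀ p q : ℕ, p.Prime → q.Prime → p < q → (∀ r, p < r → r < q → ¬ r.Prime) →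
      C 0 q = 1 ∧ ∀ k, 1 ≤ k → C k q = C k p - (1 / (p : ℝ)) * C (k - 1) p)
    {p : ℕ} (hp : p.Prime) :
    PowerSeries.mk (C · p) * (1 - PowerSeries.C (p : ℝ)⁻¹ * X) = formalExp (etaExponent p) := by
  have hlog (r : ℕ) : constantCoeff (logOneSub (r : ℝ)⁻¹) = 0 := constantCoeff_logOneSub _
  rw [mk_eq_mul_prod_primesBelow ((hC2 0).trans hc0) hCstep hp, mul_assoc,
    ← prod_primesBelow_succ hp, etaExponent,
    formalExp_add (constantCoeff_newtonSeries Zp) (by simp [hlog]),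
    formalExp_sum _ _ fun r _ ↦ hlog r]
  simp only [formalExp_logOneSub, hC2, mk_eq_formalExp_newtonSeries hc0 hc]

end EtaCoefficient

end

theorem eta_p_value_general (c : ℕ → ℝ) (hc0 : c 0 = 1)
    (hc : ∀ k, 1 ≤ k → c k = (1 / (k : ℝ)) * ∑ j ∈ Finset.Icc 2 k, c (k - j) * Zp j)
    (C : ℕ → ℕ → ℝ) (hC2 : ∀ k, C k 2 = c k)
    (hCstep : ∀ p q : ℕ, p.Prime → q.Prime → p < q → (∀ r, p < r → r < q → ¬ r.Prime) →
      C 0 q = 1 ∧ ∀ k, 1 ≤ k → C k q = C k p - (1 / (p : ℝ)) * C (k - 1) p)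
    (p : ℕ) (hp : p.Prime) :
    Multipliable (fun q : {q : Nat.Primes // p < (q : ℕ)} =>
        (1 - (p : ℝ) / ((q.1 : ℕ) : ℝ))⁻¹ * Real.exp (-(p : ℝ) / ((q.1 : ℕ) : ℝ)))
    ∧ Tendsto (fun k : ℕ => C k p * (p : ℝ) ^ k) atTop
        (nhds (Real.exp (-∑ q ∈ Nat.primesBelow (p + 1), (p : ℝ) / q)
          * ∏' q : {q : Nat.Primes // p < (q : ℕ)},
            (1 - (p : ℝ) / ((q.1 : ℕ) : ℝ))⁻¹ * Real.exp (-(p : ℝ) / ((q.1 : ℕ) : ℝ)))) := by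
  have hprod := hasProd_inv_one_sub_mul_exp_neg (div_add_one_lt_one p) (abs_div_primesGT_le p)
    (summable_div_primesGT_sq p)
  have hexponent := hasSum_etaExponent p
  have hexp := hasSum_coeff_formalExp (constantCoeff_etaExponent p) hexponent.summable.norm
  rw [hexponent.tsum_eq, ← Real.exp_eq_exp_ℝ, Real.exp_add, ← hprod.tprod_eq,
    ← mk_mul_one_sub_eq_formalExp_etaExponent hc0 hc hC2 hCstep hp] at hexp
  have hlim := (tendsto_add_atTop_iff_nat 1).mpr hexp.tendsto_sum_nat
  have hp0 : (p : ℝ) ≠ 0 := Nat.cast_ne_zero.mpr hp.ne_zero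
  simp only [sum_range_coeff_mul_one_sub_inv _ hp0] at hlim
  simp only [neg_div]
  exact ⟨hprod.multipliable, hlim⟩

theorem eta_p_value (c : ℕ → ℝ) (hc0 : c 0 = 1)
    (hc : ∀ k, 1 ≤ k → c k = (1 / (k : ℝ)) * ∑ j ∈ Finset.Icc 2 k, c (k - j) * Zp j)
    (C : ℕ → ℕ → ℝ) (hC2 : ∀ k, C k 2 = c k)
    (hCstep : ∀ p q : ℕ, p.Prime → q.Prime → p < q → (∀ r, p < r → r < q → ¬ r.Prime) →
      C 0 q = 1 ∧ ∀ k, 1 ≤ k → C k q = C k p - (1 / (p : ℝ)) * C (k - 1) p)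
    (p : ℕ) (hp : p.Prime) (η : ℝ)
    (hη : Tendsto (fun k : ℕ => C k p * (p : ℝ) ^ k) atTop (nhds η)) :
    Multipliable (fun q : {q : Nat.Primes // p < (q : ℕ)} =>
        (1 - (p : ℝ) / ((q.1 : ℕ) : ℝ))⁻¹ * Real.exp (-(p : ℝ) / ((q.1 : ℕ) : ℝ)))
    ∧ η = Real.exp (-∑ q ∈ Nat.primesBelow (p + 1), (p : ℝ) / q)
        * ∏' q : {q : Nat.Primes // p < (q : ℕ)},
            (1 - (p : ℝ) / ((q.1 : ℕ) : ℝ))⁻¹ * Real.exp (-(p : ℝ) / ((q.1 : ℕ) : ℝ)) := by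
  obtain ⟨hmultipliable, hlim⟩ := eta_p_value_general c hc0 hc C hC2 hCstep p hp
  exact ⟨hmultipliable, tendsto_nhds_unique hη hlim⟩
end

section
/- The coefficients c_k (defined by c₀ = 1, c_k = (1/k) ∑_{j=2}^{k} c_{k-j} Z(j)) satisfy c_k = η·2^{-k} + O(3^{-k}) as k → ∞, where η = e^{-1} ∏_{p > 2, p prime} (1 - 2/p)^{-1} e^{-2/p}. -/
open Filter Real Asymptotics
open scoped Classical Topology BigOperators

/-!
The recurrence says that `C = ∑ cₖ Xᵏ` satisfies `C' = L' C` with `L = ∑_{j ≥ 2} Z(j) Xʲ / j`, so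
`C` is the product of the factors `(1 - X/p)⁻¹ e^{-X/p}` over all primes. The poles nearest to `0`
are simple poles at `2` and `3`. Multiplying `C` by `1 - X/2` and `1 - X/3` removes their logarithms
from `L`, and the resulting equation gives coefficients `O(tᵏ)` for some `t < 1/3`. Multiplying back
by the two geometric series reintroduces the poles: the one at `3` costs `O(3⁻ᵏ)`, and the one at
`2` contributes `D(2) 2⁻ᵏ` with `D = (1 - X/2) C`. Since `D' = (L + log (1 - X/2))' D`, the value
`D(2)` is `e^{-1}` times the exponential of a convergent sum over `p > 2`, that is `η`. The primes
enter only through the square-summability of `1/p` and the strict dominance of `1/2` and `1/3`.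
-/

section SeriesSum

open PowerSeries (C X coeff)

open scoped PowerSeries

variable {𝕜 : Type*} [NormedField 𝕜]

/-- The sum `∑ₙ Fₙ xⁿ` of the power series `F` at the point `x`, by the conventions of `tsum` equal
to `0` where the series is not summable. -/
noncomputable def seriesSum (F : 𝕜⟦X⟧) (x : 𝕜) : 𝕜 := ∑' n, coeff n F * x ^ n

/-- The geometric series `∑ₙ rⁿ Xⁿ`, the formal inverse of `1 - r X`. -/
def geometricSeries (r : 𝕜) : 𝕜⟦X⟧ := PowerSeries.mk fun n => r ^ n

lemma one_sub_C_mul_X_mul_geometricSeries (r : 𝕜) : (1 - C r * X) * geometricSeries r = 1 := by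
  ext n
  rw [sub_mul, one_mul, mul_assoc]
  cases n <;> simp [geometricSeries, PowerSeries.coeff_one, pow_succ']

lemma mul_one_sub_mul_geometricSeries (F : 𝕜⟦X⟧) (r : 𝕜) :
    F * (1 - C r * X) * geometricSeries r = F := by
  rw [mul_assoc, one_sub_C_mul_X_mul_geometricSeries, mul_one]

lemma derivative_C_mul_X (r : 𝕜) : d⁄dX 𝕜 (C r * X) = C r := by
  simp

lemma derivative_geometricSeries (r : 𝕜) :
    d⁄dX 𝕜 (geometricSeries r) = C r * geometricSeries r * geometricSeries r := by
  have hinv := one_sub_C_mul_X_mul_geometricSeries r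
  have hderiv := congrArg (d⁄dX 𝕜) hinv
  rw [Derivation.leibniz, map_sub, derivative_C_mul_X, Derivation.map_one_eq_zero] at hderiv
  simp only [smul_eq_mul] at hderiv
  linear_combination geometricSeries r * hderiv - d⁄dX 𝕜 (geometricSeries r) * hinv

lemma seriesSum_zero (F : 𝕜⟦X⟧) : seriesSum F 0 = coeff 0 F := by
  rw [seriesSum, tsum_eq_single 0 fun n hn => by simp [hn]]
  simp

lemma seriesSum_C_mul_X (r x : 𝕜) : seriesSum (C r * X) x = r * x := by
  rw [seriesSum, tsum_eq_single 1 fun n hn => by simp [PowerSeries.coeff_X, hn]]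
  simp

lemma seriesSum_sub {F G : 𝕜⟦X⟧} {x : 𝕜} (hF : Summable fun n => coeff n F * x ^ n)
    (hG : Summable fun n => coeff n G * x ^ n) :
    seriesSum (F - G) x = seriesSum F x - seriesSum G x := by
  simp only [seriesSum, map_sub, sub_mul, hF.tsum_sub hG]

lemma seriesSum_mul [CompleteSpace 𝕜] {F G : 𝕜⟦X⟧} {x : 𝕜}
    (hF : Summable fun n => ‖coeff n F * x ^ n‖) (hG : Summable fun n => ‖coeff n G * x ^ n‖) :
    seriesSum (F * G) x = seriesSum F x * seriesSum G x := by
  simp only [seriesSum]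
  rw [tsum_mul_tsum_eq_tsum_sum_antidiagonal_of_summable_norm hF hG]
  refine tsum_congr fun n => ?_
  rw [PowerSeries.coeff_mul, Finset.sum_mul]
  refine Finset.sum_congr rfl fun p hp => ?_
  rw [← Finset.HasAntidiagonal.mem_antidiagonal.1 hp, pow_add]
  ring

lemma summable_norm_coeff_mul_pow {F : 𝕜⟦X⟧} {ρ : ℝ} {x : 𝕜} (hρ : 0 ≤ ρ) (hx : ρ * ‖x‖ < 1)
    (hF : (fun n => coeff n F) =O[atTop] fun n => ρ ^ n) :
    Summable fun n => ‖coeff n F * x ^ n‖ := by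
  refine summable_of_isBigO_nat (summable_geometric_of_lt_one (by positivity) hx) ?_
  have hpow : (fun n => x ^ n) =O[atTop] fun n => ‖x‖ ^ n :=
    IsBigO.of_norm_left (by simpa only [norm_pow] using isBigO_refl _ _)
  simpa only [mul_pow] using (hF.mul hpow).norm_left

lemma coeff_C_mul_X_isBigO (r : 𝕜) (ρ : ℝ) :
    (fun n => coeff n (C r * X)) =O[atTop] fun n => ρ ^ n := by
  refine (isBigO_zero _ _).congr' ?_ EventuallyEq.rfl
  filter_upwards [eventually_gt_atTop 1] with n hn
  simp [PowerSeries.coeff_X, hn.ne']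

lemma coeff_sub_C_mul_X_isBigO {B : 𝕜⟦X⟧} {ρ : ℝ}
    (hB : (fun n => coeff n B) =O[atTop] fun n => ρ ^ n) (r : 𝕜) :
    (fun n => coeff n (B - C r * X)) =O[atTop] fun n => ρ ^ n :=
  (hB.sub (coeff_C_mul_X_isBigO r ρ)).congr_left fun _ => (map_sub ..).symm

lemma coeff_mul_geometricSeries_sub_isBigO [CompleteSpace 𝕜] {F : 𝕜⟦X⟧} {t : ℝ} {r : 𝕜} (ht : 0 < t)
    (htr : t < ‖r‖) (hF : (fun n => coeff n F) =O[atTop] fun n => t ^ n) :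
    (fun n => coeff n (F * geometricSeries r) - seriesSum F r⁻¹ * r ^ n) =O[atTop]
      fun n => t ^ n := by
  have hr : r ≠ 0 := norm_pos_iff.1 (ht.trans htr)
  have hq : t / ‖r‖ < 1 := (div_lt_one (ht.trans htr)).2 htr
  obtain ⟨K, -, hK⟩ := bound_of_isBigO_nat_atTop hF
  have hterm : ∀ n, ‖coeff n F * r⁻¹ ^ n‖ ≤ K * (t / ‖r‖) ^ n := fun n => by
    have := hK (pow_pos ht n).ne'
    rw [norm_of_nonneg (by positivity)] at this
    rw [norm_mul, norm_pow, norm_inv, div_pow, inv_pow, ← div_eq_mul_inv, ← mul_div_assoc]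
    gcongr
  have hsum : HasSum (fun n => coeff n F * r⁻¹ ^ n) (seriesSum F r⁻¹) :=
    (Summable.of_norm_bounded
      ((summable_geometric_of_lt_one (by positivity) hq).mul_left K) hterm).hasSum
  have hcoeff : ∀ n, coeff n (F * geometricSeries r)
      = (∑ i ∈ Finset.range (n + 1), coeff i F * r⁻¹ ^ i) * r ^ n := fun n => by
    rw [PowerSeries.coeff_mul, Finset.Nat.sum_antidiagonal_eq_sum_range_succ_mk, Finset.sum_mul]
    refine Finset.sum_congr rfl fun i hi => ?_
    rw [geometricSeries, PowerSeries.coeff_mk, pow_sub₀ r hr (Finset.mem_range_succ_iff.1 hi),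
      inv_pow]
    ring
  refine IsBigO.of_bound (K * (t / ‖r‖) / (1 - t / ‖r‖)) (Eventually.of_forall fun n => ?_)
  calc ‖coeff n (F * geometricSeries r) - seriesSum F r⁻¹ * r ^ n‖
      = ‖(∑ i ∈ Finset.range (n + 1), coeff i F * r⁻¹ ^ i) - seriesSum F r⁻¹‖ * ‖r‖ ^ n := by
        rw [hcoeff, ← sub_mul, norm_mul, norm_pow]
    _ ≤ K * (t / ‖r‖) ^ (n + 1) / (1 - t / ‖r‖) * ‖r‖ ^ n := by
        gcongr
        exact norm_sub_le_of_geometric_bound_of_hasSum hq hterm hsum (n + 1)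
    _ = K * (t / ‖r‖) / (1 - t / ‖r‖) * ((t / ‖r‖) ^ n * ‖r‖ ^ n) := by ring
    _ = K * (t / ‖r‖) / (1 - t / ‖r‖) * ‖t ^ n‖ := by
        rw [← mul_pow, div_mul_cancel₀ _ (ht.trans htr).ne', norm_of_nonneg (by positivity)]

end SeriesSum

section RealSequences

lemma exists_gt_mul_lt_one {a b : ℝ} (h : a * b < 1) : ∃ c > a, c * b < 1 := by
  have hnear : ∀ᶠ c in 𝓝 a, c * b < 1 :=
    (continuous_mul_const b).continuousAt.eventually_lt_const h
  exact (((hnear.filter_mono nhdsWithin_le_nhds).and self_mem_nhdsWithin).exists (f := 𝓝[>] a)).imp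
    fun c hc => ⟨hc.2, hc.1⟩

/-- Once `n + 1` exceeds `∑ g`, the next term is at most the maximum of the previous ones. -/
lemma bddAbove_range_of_mul_le_sum {a g : ℕ → ℝ} (ha : ∀ n, 0 ≤ a n) (hg : ∀ n, 0 ≤ g n)
    (hgs : Summable g)
    (h : ∀ n : ℕ, ((n : ℝ) + 1) * a (n + 1) ≤ ∑ k ∈ Finset.range (n + 1), g k * a (n - k)) :
    BddAbove (Set.range a) := by
  obtain ⟨N, hN⟩ := exists_nat_ge (∑' k, g k)
  set M := ∑ i ∈ Finset.range (N + 1), a i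
  have hM : 0 ≤ M := Finset.sum_nonneg fun i _ => ha i
  refine ⟨M, Set.forall_mem_range.2 fun n => ?_⟩
  induction n using Nat.strong_induction_on with
  | _ n ih =>
  by_cases hn : n ≤ N
  · exact Finset.single_le_sum (fun i _ => ha i) (Finset.mem_range_succ_iff.2 hn)
  obtain ⟨m, rfl⟩ := Nat.exists_eq_succ_of_ne_zero (Nat.ne_zero_of_lt (not_le.1 hn))
  have hNm : (N : ℝ) ≤ m + 1 := by exact_mod_cast (not_le.1 hn).le
  refine le_of_mul_le_mul_left ?_ (by positivity : (0 : ℝ) < m + 1)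
  calc ((m : ℝ) + 1) * a (m + 1) ≤ ∑ k ∈ Finset.range (m + 1), g k * a (m - k) := h m
    _ ≤ ∑ k ∈ Finset.range (m + 1), g k * M := by
        gcongr with k
        · exact hg k
        · exact ih _ (by omega)
    _ = (∑ k ∈ Finset.range (m + 1), g k) * M := (Finset.sum_mul ..).symm
    _ ≤ ((m : ℝ) + 1) * M := by
        gcongr
        exact ((hgs.sum_le_tsum _ fun k _ => hg k).trans hN).trans hNm

end RealSequences

section DifferentialEquation

open PowerSeries (C X coeff)

open scoped PowerSeries

variable {𝕜 : Type*} [RCLike 𝕜]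

lemma coeff_derivative_isBigO {F : 𝕜⟦X⟧} {ρ σ : ℝ} (hρ : 0 ≤ ρ) (hρσ : ρ < σ)
    (hF : (fun n => coeff n F) =O[atTop] fun n => ρ ^ n) :
    (fun n => coeff n (d⁄dX 𝕜 F)) =O[atTop] fun n => σ ^ n := by
  have hmul : (fun n : ℕ => coeff n F * (n : 𝕜)) =O[atTop] fun n => σ ^ n := by
    refine IsBigO.trans ?_ (isLittleO_pow_const_mul_const_pow_const_pow_of_norm_lt 1
      ((norm_of_nonneg hρ).trans_lt hρσ)).isBigO
    simpa [mul_comm] using hF.mul (IsBigO.of_bound 1 (by simp) :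
      (fun n : ℕ => (n : 𝕜)) =O[atTop] fun n => (n : ℝ))
  refine ((hmul.comp_tendsto (tendsto_add_atTop_nat 1)).congr_left fun n => ?_).trans
    (IsBigO.of_bound σ (Eventually.of_forall fun n => ?_))
  · simp [PowerSeries.coeff_derivative]
  · simp [abs_of_nonneg (hρ.trans hρσ.le), pow_succ']

lemma hasDerivAt_seriesSum {F : 𝕜⟦X⟧} {ρ : ℝ} {x : 𝕜} (hρ : 0 ≤ ρ) (hx : ρ * ‖x‖ < 1)
    (hF : (fun n => coeff n F) =O[atTop] fun n => ρ ^ n) :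
    HasDerivAt (seriesSum F) (seriesSum (d⁄dX 𝕜 F) x) x := by
  obtain ⟨σ, hρσ, hσx⟩ := exists_gt_mul_lt_one hx
  obtain ⟨R, hxR, hRσ⟩ := exists_gt_mul_lt_one ((mul_comm _ _).trans_lt hσx)
  have hR : 0 < R := (norm_nonneg x).trans_lt hxR
  have hderiv : ∀ (y : 𝕜) (n : ℕ), coeff (n + 1) F * (((n + 1 : ℕ) : 𝕜) * y ^ n)
      = coeff n (d⁄dX 𝕜 F) * y ^ n := fun y n => by
    rw [PowerSeries.coeff_derivative]
    push_cast
    ring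
  have hu : Summable fun n : ℕ => ‖coeff n F * ((n : 𝕜) * (R : 𝕜) ^ (n - 1))‖ := by
    rw [← summable_nat_add_iff 1]
    simp only [Nat.add_sub_cancel, hderiv]
    refine summable_norm_coeff_mul_pow (hρ.trans hρσ.le) ?_ (coeff_derivative_isBigO hρ hρσ hF)
    rwa [RCLike.norm_ofReal, abs_of_pos hR, mul_comm]
  have hbound : ∀ (n : ℕ), ∀ y ∈ Metric.ball (0 : 𝕜) R, ‖coeff n F * ((n : 𝕜) * y ^ (n - 1))‖
      ≤ ‖coeff n F * ((n : 𝕜) * (R : 𝕜) ^ (n - 1))‖ := fun n y hy => by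
    simp only [norm_mul, norm_pow, RCLike.norm_ofReal, abs_of_pos hR]
    gcongr
    exact (mem_ball_zero_iff.1 hy).le
  have hxball : x ∈ Metric.ball (0 : 𝕜) R := mem_ball_zero_iff.2 hxR
  refine (hasDerivAt_tsum_of_isPreconnected hu Metric.isOpen_ball
    (Metric.isPreconnected_ball) (fun n y _ => (hasDerivAt_pow n y).const_mul (coeff n F))
    hbound hxball (summable_norm_coeff_mul_pow hρ hx hF).of_norm hxball).congr_deriv ?_
  rw [(Summable.of_norm_bounded hu fun n => hbound n x hxball).tsum_eq_zero_add]
  simp only [Nat.add_sub_cancel, hderiv, Nat.cast_zero, zero_mul, mul_zero, zero_add, seriesSum]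

lemma coeff_isBigO_of_derivative_eq_mul {F B : 𝕜⟦X⟧} {ρ t : ℝ} (hρ : 0 ≤ ρ) (hρt : ρ < t)
    (hB : (fun n => coeff n B) =O[atTop] fun n => ρ ^ n)
    (hFB : d⁄dX 𝕜 F = d⁄dX 𝕜 B * F) :
    (fun n => coeff n F) =O[atTop] fun n => t ^ n := by
  have ht : 0 < t := hρ.trans_lt hρt
  obtain ⟨σ, hρσ, hσt⟩ := exists_between hρt
  have hsum : Summable fun n => t⁻¹ * ‖coeff n (d⁄dX 𝕜 B) * ((t⁻¹ : ℝ) : 𝕜) ^ n‖ := by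
    refine (summable_norm_coeff_mul_pow (hρ.trans hρσ.le) ?_
      (coeff_derivative_isBigO hρ hρσ hB)).mul_left _
    rwa [RCLike.norm_ofReal, abs_of_pos (inv_pos.2 ht), ← div_eq_mul_inv, div_lt_one ht]
  obtain ⟨M, hM⟩ := bddAbove_range_of_mul_le_sum (a := fun n => ‖coeff n F‖ * t⁻¹ ^ n)
    (fun n => by positivity) (fun n => by positivity) hsum fun n => by
      have hnorm : ‖coeff (n + 1) F‖ * ((n : ℝ) + 1)
          ≤ ∑ k ∈ Finset.range (n + 1), ‖coeff k (d⁄dX 𝕜 B)‖ * ‖coeff (n - k) F‖ := by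
        have hn : ‖(n : 𝕜) + 1‖ = (n : ℝ) + 1 := by
          rw [← Nat.cast_succ, RCLike.norm_natCast, Nat.cast_succ]
        rw [← hn, ← norm_mul, ← PowerSeries.coeff_derivative, hFB, PowerSeries.coeff_mul,
          Finset.Nat.sum_antidiagonal_eq_sum_range_succ_mk]
        exact (norm_sum_le _ _).trans_eq (by simp only [norm_mul])
      calc ((n : ℝ) + 1) * (‖coeff (n + 1) F‖ * t⁻¹ ^ (n + 1))
          = (‖coeff (n + 1) F‖ * ((n : ℝ) + 1)) * t⁻¹ ^ (n + 1) := by ring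
        _ ≤ (∑ k ∈ Finset.range (n + 1), ‖coeff k (d⁄dX 𝕜 B)‖ * ‖coeff (n - k) F‖)
              * t⁻¹ ^ (n + 1) := by gcongr
        _ = _ := by
          rw [Finset.sum_mul]
          refine Finset.sum_congr rfl fun k hk => ?_
          obtain ⟨d, rfl⟩ := Nat.exists_eq_add_of_le (Finset.mem_range_succ_iff.1 hk)
          rw [norm_mul, norm_pow, RCLike.norm_ofReal, abs_of_pos (inv_pos.2 ht),
            Nat.add_sub_cancel_left]
          ring
  refine IsBigO.of_bound M (Eventually.of_forall fun n => ?_)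
  have := hM (Set.mem_range_self n)
  rwa [norm_of_nonneg (by positivity), ← div_le_iff₀ (by positivity), div_eq_mul_inv, ← inv_pow]

lemma seriesSum_eq_mul_exp {F B : 𝕜⟦X⟧} {ρ : ℝ} {x : 𝕜} (hρ : 0 ≤ ρ) (hx : ρ * ‖x‖ < 1)
    (hF : (fun n => coeff n F) =O[atTop] fun n => ρ ^ n)
    (hB : (fun n => coeff n B) =O[atTop] fun n => ρ ^ n)
    (hFB : d⁄dX 𝕜 F = d⁄dX 𝕜 B * F) :
    seriesSum F x = coeff 0 F * NormedSpace.exp (seriesSum B x - coeff 0 B) := by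
  obtain ⟨R, hxR, hRρ⟩ := exists_gt_mul_lt_one ((mul_comm _ _).trans_lt hx)
  have hball : ∀ y ∈ Metric.ball (0 : 𝕜) R, ρ * ‖y‖ < 1 := fun y hy =>
    (mul_le_mul_of_nonneg_left (mem_ball_zero_iff.1 hy).le hρ).trans_lt
      ((mul_comm _ _).trans_lt hRρ)
  have hderiv : ∀ y ∈ Metric.ball (0 : 𝕜) R,
      HasDerivAt (fun z => seriesSum F z * NormedSpace.exp (-seriesSum B z)) 0 y := fun y hy => by
    obtain ⟨σ, hρσ, hσ⟩ := exists_gt_mul_lt_one (hball y hy)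
    have hmul : seriesSum (d⁄dX 𝕜 F) y = seriesSum (d⁄dX 𝕜 B) y * seriesSum F y := by
      rw [hFB]
      exact seriesSum_mul
        (summable_norm_coeff_mul_pow (hρ.trans hρσ.le) hσ (coeff_derivative_isBigO hρ hρσ hB))
        (summable_norm_coeff_mul_pow hρ (hball y hy) hF)
    refine ((hasDerivAt_seriesSum hρ (hball y hy) hF).mul
      (hasDerivAt_exp.comp y (hasDerivAt_seriesSum hρ (hball y hy) hB).neg)).congr_deriv ?_
    simp only [hmul, Function.comp_apply, Pi.neg_apply]
    ring
  have hconst := Metric.isOpen_ball.is_const_of_deriv_eq_zero Metric.isPreconnected_ball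
    (fun y hy => (hderiv y hy).differentiableAt.differentiableWithinAt)
    (fun y hy => (hderiv y hy).deriv) (mem_ball_zero_iff.2 hxR)
    (Metric.mem_ball_self ((norm_nonneg x).trans_lt hxR))
  calc seriesSum F x
      = seriesSum F x * NormedSpace.exp (-seriesSum B x) * NormedSpace.exp (seriesSum B x) := by
        rw [mul_assoc, ← NormedSpace.exp_add, neg_add_cancel, NormedSpace.exp_zero, mul_one]
    _ = coeff 0 F * NormedSpace.exp (seriesSum B x - coeff 0 B) := by
        rw [hconst, seriesSum_zero, seriesSum_zero, mul_assoc, ← NormedSpace.exp_add,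
          neg_add_eq_sub]

end DifferentialEquation

section LogFactor

open PowerSeries (C X coeff)

open scoped PowerSeries

variable {𝕜 : Type*} [RCLike 𝕜]

/-- The expansion `∑_{n ≥ 2} rⁿ Xⁿ / n` of `-log (1 - r X) - r X`, the logarithm of the factor
`(1 - r X)⁻¹ e^{-r X}`. -/
noncomputable def logFactor (r : 𝕜) : 𝕜⟦X⟧ :=
  PowerSeries.mk fun n => if n < 2 then 0 else r ^ n / n

lemma logFactor_zero : logFactor (0 : 𝕜) = 0 := by
  ext n
  rcases n with _ | n <;> simp [logFactor]

lemma constantCoeff_logFactor (r : 𝕜) : PowerSeries.constantCoeff (logFactor r) = 0 := by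
  rw [← PowerSeries.coeff_zero_eq_constantCoeff_apply, logFactor, PowerSeries.coeff_mk,
    if_pos two_pos]

lemma coeff_derivative_logFactor (r : 𝕜) (n : ℕ) :
    coeff n (d⁄dX 𝕜 (logFactor r)) = if n = 0 then 0 else r ^ (n + 1) := by
  rw [PowerSeries.coeff_derivative, logFactor, PowerSeries.coeff_mk]
  rcases n with _ | n
  · simp
  · rw [if_neg (by omega), if_neg n.succ_ne_zero]
    push_cast
    exact div_mul_cancel₀ _ (by exact_mod_cast (n + 1).succ_ne_zero)

lemma derivative_logFactor_add_C (r : 𝕜) :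
    d⁄dX 𝕜 (logFactor r) + C r = C r * geometricSeries r := by
  ext n
  rw [map_add, coeff_derivative_logFactor, PowerSeries.coeff_C, PowerSeries.coeff_C_mul,
    geometricSeries, PowerSeries.coeff_mk, ← pow_succ']
  rcases n with _ | n <;> simp

lemma norm_coeff_logFactor_le {r : 𝕜} {ρ : ℝ} (hρ : 0 < ρ) (hr : ‖r‖ ≤ ρ) (n : ℕ) :
    ‖coeff n (logFactor r)‖ ≤ ‖r‖ ^ 2 / ρ ^ 2 * ρ ^ n := by
  rw [logFactor, PowerSeries.coeff_mk]
  split_ifs with hn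
  · rw [norm_zero]
    positivity
  obtain ⟨m, rfl⟩ := Nat.exists_eq_add_of_le (not_lt.1 hn)
  calc ‖r ^ (2 + m) / ((2 + m : ℕ) : 𝕜)‖ ≤ ‖r‖ ^ (2 + m) := by
        rw [norm_div, norm_pow, RCLike.norm_natCast]
        exact div_le_self (by positivity) (by exact_mod_cast (by omega : 1 ≤ 2 + m))
    _ ≤ ‖r‖ ^ 2 * ρ ^ m := by
        rw [pow_add]
        gcongr
    _ = ‖r‖ ^ 2 / ρ ^ 2 * ρ ^ (2 + m) := by
        rw [pow_add]
        field_simp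

lemma seriesSum_geometricSeries {r x : 𝕜} (hrx : ‖r‖ * ‖x‖ < 1) :
    seriesSum (geometricSeries r) x = (1 - r * x)⁻¹ := by
  simp only [seriesSum, geometricSeries, PowerSeries.coeff_mk, ← mul_pow]
  exact tsum_geometric_of_norm_lt_one ((norm_mul r x).trans_lt hrx)

lemma exp_seriesSum_logFactor {r x : 𝕜} (hrx : ‖r‖ * ‖x‖ < 1) :
    NormedSpace.exp (seriesSum (logFactor r) x)
      = (1 - r * x)⁻¹ * NormedSpace.exp (-(r * x)) := by
  obtain ⟨ρ, hrρ, hρx⟩ := exists_gt_mul_lt_one hrx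
  have hρ : 0 < ρ := (norm_nonneg r).trans_lt hrρ
  have hlog : (fun n => coeff n (logFactor r)) =O[atTop] fun n => ρ ^ n :=
    IsBigO.of_bound _ (Eventually.of_forall fun n => by
      simpa only [norm_of_nonneg (pow_pos hρ n).le] using norm_coeff_logFactor_le hρ hrρ.le n)
  have hlin := coeff_C_mul_X_isBigO (-r) ρ
  have hgeom : (fun n => coeff n (geometricSeries r)) =O[atTop] fun n => ρ ^ n :=
    IsBigO.of_bound 1 (Eventually.of_forall fun n => by
      rw [geometricSeries, PowerSeries.coeff_mk, one_mul, norm_pow, norm_pow, norm_of_nonneg hρ.le]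
      gcongr)
  have hODE : d⁄dX 𝕜 (geometricSeries r)
      = d⁄dX 𝕜 (logFactor r - C (-r) * X) * geometricSeries r := by
    rw [derivative_geometricSeries, map_sub, derivative_C_mul_X, map_neg, sub_neg_eq_add,
      derivative_logFactor_add_C]
  have hexp := seriesSum_eq_mul_exp hρ.le hρx hgeom
    ((hlog.sub hlin).congr_left fun n => (map_sub ..).symm) hODE
  rw [seriesSum_geometricSeries hrx, seriesSum_sub
    (summable_norm_coeff_mul_pow hρ.le hρx hlog).of_norm
    (summable_norm_coeff_mul_pow hρ.le hρx hlin).of_norm, seriesSum_C_mul_X] at hexp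
  rw [hexp]
  simp [geometricSeries, constantCoeff_logFactor, ← NormedSpace.exp_add]

end LogFactor

section LogProduct

open PowerSeries (C X coeff)

open scoped PowerSeries

variable {ι 𝕜 : Type*} [RCLike 𝕜] {a : ι → 𝕜}

/-- The coefficientwise sum of the series `logFactor (a i)`, the logarithm of the product
`∏ᵢ (1 - aᵢ X)⁻¹ e^{-aᵢ X}`. The family `a` is meant to be square-summable. -/
noncomputable def logProduct (a : ι → 𝕜) : 𝕜⟦X⟧ :=
  PowerSeries.mk fun n => ∑' i, coeff n (logFactor (a i))

lemma constantCoeff_logProduct (a : ι → 𝕜) : PowerSeries.constantCoeff (logProduct a) = 0 := by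
  rw [← PowerSeries.coeff_zero_eq_constantCoeff_apply, logProduct, PowerSeries.coeff_mk]
  simp [constantCoeff_logFactor]

lemma coeff_derivative_logProduct (a : ι → 𝕜) (n : ℕ) :
    coeff n (d⁄dX 𝕜 (logProduct a)) = if n = 0 then 0 else ∑' i, a i ^ (n + 1) := by
  rw [PowerSeries.coeff_derivative, logProduct, PowerSeries.coeff_mk, ← tsum_mul_right]
  simp only [← PowerSeries.coeff_derivative, coeff_derivative_logFactor]
  split_ifs <;> simp

lemma derivative_mk_eq_derivative_logProduct_mul {c : ℕ → 𝕜}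
    (hc : ∀ k, 1 ≤ k →
      c k = (1 / (k : 𝕜)) * ∑ j ∈ Finset.Icc 2 k, c (k - j) * ∑' i, a i ^ j) :
    d⁄dX 𝕜 (PowerSeries.mk c) = d⁄dX 𝕜 (logProduct a) * PowerSeries.mk c := by
  ext n
  have hn : (n : 𝕜) + 1 ≠ 0 := by exact_mod_cast n.succ_ne_zero
  calc coeff n (d⁄dX 𝕜 (PowerSeries.mk c))
      = ∑ j ∈ Finset.Ico 2 (n + 2), c (n + 1 - j) * ∑' i, a i ^ j := by
        rw [PowerSeries.coeff_derivative, PowerSeries.coeff_mk, hc (n + 1) n.succ_pos,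
          Nat.cast_succ, one_div, mul_comm, mul_inv_cancel_left₀ hn]
        rfl
    _ = ∑ k ∈ Finset.range n, (∑' i, a i ^ (k + 1 + 1)) * c (n - (k + 1)) := by
        rw [Finset.sum_Ico_eq_sum_range, Nat.add_sub_cancel]
        refine Finset.sum_congr rfl fun k _ => ?_
        rw [mul_comm, show n + 1 - (2 + k) = n - (k + 1) by omega, add_comm 2 k]
    _ = coeff n (d⁄dX 𝕜 (logProduct a) * PowerSeries.mk c) := by
        rw [PowerSeries.coeff_mul, Finset.Nat.sum_antidiagonal_eq_sum_range_succ_mk,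
          Finset.sum_range_succ']
        simp [coeff_derivative_logProduct, -PowerSeries.coeff_zero_eq_constantCoeff]

variable {ρ : ℝ}

lemma norm_coeff_logProduct_le (hρ : 0 < ρ) (ha : Summable fun i => ‖a i‖ ^ 2)
    (haρ : ∀ i, ‖a i‖ ≤ ρ) (n : ℕ) :
    ‖coeff n (logProduct a)‖ ≤ (∑' i, ‖a i‖ ^ 2 / ρ ^ 2) * ρ ^ n := by
  rw [logProduct, PowerSeries.coeff_mk, ← tsum_mul_right]
  exact tsum_of_norm_bounded ((ha.div_const _).mul_right _).hasSum
    fun i => norm_coeff_logFactor_le hρ (haρ i) n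

lemma coeff_logProduct_isBigO (hρ : 0 < ρ) (ha : Summable fun i => ‖a i‖ ^ 2)
    (haρ : ∀ i, ‖a i‖ ≤ ρ) : (fun n => coeff n (logProduct a)) =O[atTop] fun n => ρ ^ n :=
  IsBigO.of_bound _ (Eventually.of_forall fun n => by
    simpa only [norm_of_nonneg (pow_pos hρ n).le] using norm_coeff_logProduct_le hρ ha haρ n)

lemma logProduct_eq_update_add_logFactor (hρ : 0 < ρ) (ha : Summable fun i => ‖a i‖ ^ 2)
    (haρ : ∀ i, ‖a i‖ ≤ ρ) (q : ι) :
    logProduct a = logProduct (Function.update a q 0) + logFactor (a q) := by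
  ext n
  have hsum : Summable fun i => coeff n (logFactor (a i)) :=
    .of_norm_bounded ((ha.div_const _).mul_right _) fun i => norm_coeff_logFactor_le hρ (haρ i) n
  rw [map_add, logProduct, logProduct, PowerSeries.coeff_mk, PowerSeries.coeff_mk,
    hsum.tsum_eq_add_tsum_ite q, add_comm]
  congr 1
  refine tsum_congr fun i => ?_
  rw [Function.update_apply]
  split_ifs <;> simp [logFactor_zero]

lemma hasSum_seriesSum_logFactor {x : 𝕜} (hρ : 0 < ρ) (hx : ρ * ‖x‖ < 1)
    (ha : Summable fun i => ‖a i‖ ^ 2) (haρ : ∀ i, ‖a i‖ ≤ ρ) :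
    HasSum (fun i => seriesSum (logFactor (a i)) x) (seriesSum (logProduct a) x) := by
  have hsum : Summable fun p : ι × ℕ => coeff p.2 (logFactor (a p.1)) * x ^ p.2 := by
    refine .of_norm_bounded ((ha.div_const (ρ ^ 2)).mul_of_nonneg
      (summable_geometric_of_lt_one (by positivity) hx) (fun i => by positivity)
      fun n => by positivity) fun p => ?_
    rw [norm_mul, norm_pow, mul_pow, ← mul_assoc]
    gcongr
    exact norm_coeff_logFactor_le hρ (haρ p.1) p.2
  have hswap : ∑' i, seriesSum (logFactor (a i)) x = seriesSum (logProduct a) x := by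
    simp only [seriesSum, logProduct, PowerSeries.coeff_mk, ← tsum_mul_right]
    exact Summable.tsum_comm (f := fun n i => coeff n (logFactor (a i)) * x ^ n) hsum.prod_symm
  exact hswap ▸ hsum.prod.hasSum

lemma hasProd_inv_one_sub_mul_exp {x : 𝕜} (hρ : 0 < ρ) (hx : ρ * ‖x‖ < 1)
    (ha : Summable fun i => ‖a i‖ ^ 2) (haρ : ∀ i, ‖a i‖ ≤ ρ) :
    HasProd (fun i => (1 - a i * x)⁻¹ * NormedSpace.exp (-(a i * x)))
      (NormedSpace.exp (seriesSum (logProduct a) x)) := by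
  have hfactor : ∀ i, ‖a i‖ * ‖x‖ < 1 := fun i =>
    (mul_le_mul_of_nonneg_right (haρ i) (norm_nonneg x)).trans_lt hx
  simp only [← exp_seriesSum_logFactor (hfactor _)]
  exact (hasSum_seriesSum_logFactor hρ hx ha haρ).exp

end LogProduct

section SimplePoles

open PowerSeries (C X coeff)

open scoped PowerSeries

variable {𝕜 : Type*} [RCLike 𝕜]

lemma derivative_mul_one_sub_eq {F B : 𝕜⟦X⟧} {r : 𝕜}
    (hFB : d⁄dX 𝕜 F = d⁄dX 𝕜 (B + logFactor r) * F) :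
    d⁄dX 𝕜 (F * (1 - C r * X)) = d⁄dX 𝕜 (B - C r * X) * (F * (1 - C r * X)) := by
  have hlog := derivative_logFactor_add_C r
  have hinv := one_sub_C_mul_X_mul_geometricSeries r
  rw [map_add] at hFB
  rw [Derivation.leibniz, map_sub, map_sub, derivative_C_mul_X, Derivation.map_one_eq_zero]
  simp only [smul_eq_mul]
  linear_combination (1 - C r * X) * hFB + F * (1 - C r * X) * hlog + F * C r * hinv

lemma coeff_isBigO_of_simple_pole {F B : 𝕜⟦X⟧} {ρ : ℝ} {s : 𝕜} (hρ : 0 ≤ ρ) (hρs : ρ < ‖s‖)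
    (hB : (fun n => coeff n B) =O[atTop] fun n => ρ ^ n)
    (hFB : d⁄dX 𝕜 F = d⁄dX 𝕜 (B + logFactor s) * F) :
    (fun n => coeff n F) =O[atTop] fun n => ‖s‖ ^ n := by
  obtain ⟨t, hρt, hts⟩ := exists_between hρs
  have ht : 0 < t := hρ.trans_lt hρt
  have hreg := coeff_mul_geometricSeries_sub_isBigO ht hts (coeff_isBigO_of_derivative_eq_mul hρ hρt
    (coeff_sub_C_mul_X_isBigO hB s) (derivative_mul_one_sub_eq hFB))
  rw [mul_one_sub_mul_geometricSeries] at hreg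
  have hpole : (fun n => seriesSum (F * (1 - C s * X)) s⁻¹ * s ^ n) =O[atTop]
      fun n => ‖s‖ ^ n :=
    IsBigO.const_mul_left (IsBigO.of_norm_left (by simpa only [norm_pow] using isBigO_refl _ _)) _
  have hts' : (fun n : ℕ => t ^ n) =O[atTop] fun n => ‖s‖ ^ n :=
    (isLittleO_pow_pow_of_lt_left ht.le hts).isBigO
  exact ((hreg.trans hts').add hpole).congr_left fun n => sub_add_cancel _ _

lemma coeff_sub_isBigO_of_two_simple_poles {F B : 𝕜⟦X⟧} {ρ : ℝ} {r s : 𝕜} (hρ : 0 ≤ ρ)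
    (hρs : ρ < ‖s‖) (hsr : ‖s‖ < ‖r‖)
    (hB : (fun n => coeff n B) =O[atTop] fun n => ρ ^ n)
    (hBs : (fun n => coeff n (B + logFactor s)) =O[atTop] fun n => ‖s‖ ^ n)
    (hFB : d⁄dX 𝕜 F = d⁄dX 𝕜 (B + logFactor s + logFactor r) * F) :
    (fun n => coeff n F - PowerSeries.constantCoeff F * NormedSpace.exp
      (seriesSum (B + logFactor s) r⁻¹ - 1 - PowerSeries.constantCoeff B) * r ^ n) =O[atTop]
      fun n => ‖s‖ ^ n := by
  have hs : 0 < ‖s‖ := hρ.trans_lt hρs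
  have hr : r ≠ 0 := norm_pos_iff.1 (hs.trans hsr)
  have hsr' : ‖s‖ * ‖r⁻¹‖ < 1 := by
    rwa [norm_inv, ← div_eq_mul_inv, div_lt_one (hs.trans hsr)]
  have hODE := derivative_mul_one_sub_eq hFB
  have hlin := coeff_C_mul_X_isBigO r ‖s‖
  have hreg : (fun n => coeff n (F * (1 - C r * X))) =O[atTop] fun n => ‖s‖ ^ n :=
    coeff_isBigO_of_simple_pole hρ hρs (coeff_sub_C_mul_X_isBigO hB r) <| by
      rw [hODE, add_sub_right_comm]
  have hvalue := seriesSum_eq_mul_exp hs.le hsr' hreg (coeff_sub_C_mul_X_isBigO hBs r) hODE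
  rw [seriesSum_sub (summable_norm_coeff_mul_pow hs.le hsr' hBs).of_norm
    (summable_norm_coeff_mul_pow hs.le hsr' hlin).of_norm, seriesSum_C_mul_X,
    mul_inv_cancel₀ hr] at hvalue
  have hpole := coeff_mul_geometricSeries_sub_isBigO hs hsr hreg
  rw [mul_one_sub_mul_geometricSeries, hvalue] at hpole
  simpa [constantCoeff_logFactor] using hpole

end SimplePoles

section NormedFamily

variable {ι E : Type*} [SeminormedAddCommGroup E] {a : ι → E}

lemma exists_bound_lt_of_tendsto_cofinite_zero {g : ι → ℝ} {S : Set ι} {s : ℝ}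
    (hg : Tendsto g cofinite (𝓝 0)) (hs : 0 < s) (h : ∀ i ∈ S, g i < s) :
    ∃ ρ, 0 < ρ ∧ ρ < s ∧ ∀ i ∈ S, g i ≤ ρ := by
  have hfin : {i | ¬ g i < s / 2}.Finite := hg.eventually_lt_const (half_pos hs)
  have hlarge : ∀ᶠ ρ in 𝓝[<] s, ∀ i ∈ {i | ¬ g i < s / 2}, i ∈ S → g i ≤ ρ :=
    (eventually_all_finite hfin).2 fun i _ => eventually_imp_distrib_left.2 fun hi =>
      mem_of_superset (Ioo_mem_nhdsLT (h i hi)) fun ρ hρ => hρ.1.le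
  obtain ⟨ρ, hρlarge, hsρ, hρs⟩ := (hlarge.and (Ioo_mem_nhdsLT (half_lt_self hs))).exists
  refine ⟨ρ, (half_pos hs).trans hsρ, hρs, fun i hi => ?_⟩
  by_cases hsmall : g i < s / 2
  · exact (hsmall.trans hsρ).le
  · exact hρlarge i hsmall hi

lemma norm_update_zero_le {q i : ι} {s : ℝ} (hs : 0 ≤ s) (h : i ≠ q → ‖a i‖ ≤ s) :
    ‖Function.update a q 0 i‖ ≤ s := by
  rw [Function.update_apply]
  split_ifs with hi
  · rwa [norm_zero]
  · exact h hi

lemma summable_norm_update_zero_sq (ha : Summable fun i => ‖a i‖ ^ 2) (q : ι) :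
    Summable fun i => ‖Function.update a q 0 i‖ ^ 2 :=
  .of_nonneg_of_le (fun i => by positivity)
    (fun i => pow_le_pow_left₀ (norm_nonneg _)
      (norm_update_zero_le (norm_nonneg (a i)) fun _ => le_rfl) 2) ha

lemma tendsto_norm_cofinite_zero_of_summable_sq (ha : Summable fun i => ‖a i‖ ^ 2) :
    Tendsto (fun i => ‖a i‖) cofinite (𝓝 0) := by
  simpa [Function.comp_def] using (Real.continuous_sqrt.tendsto 0).comp ha.tendsto_cofinite_zero

end NormedFamily

section TwoDominantTerms

variable {ι 𝕜 : Type*} [RCLike 𝕜] {a : ι → 𝕜}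

lemma exp_seriesSum_logProduct_update {q : ι} {s : ℝ} (hs : 0 < s)
    (hsq : s < ‖a q‖) (ha : Summable fun i => ‖a i‖ ^ 2) (has : ∀ i, i ≠ q → ‖a i‖ ≤ s) :
    NormedSpace.exp (seriesSum (logProduct (Function.update a q 0)) (a q)⁻¹)
      = ∏' i : {i // i ≠ q}, (1 - a i / a q)⁻¹ * NormedSpace.exp (-(a i / a q)) := by
  have hsq' : s * ‖(a q)⁻¹‖ < 1 := by
    rwa [norm_inv, ← div_eq_mul_inv, div_lt_one (hs.trans hsq)]
  have hprod := hasProd_inv_one_sub_mul_exp hs hsq' (summable_norm_update_zero_sq ha q)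
    fun i => norm_update_zero_le hs.le (has i)
  rw [← hasProd_subtype_iff_of_mulSupport_subset (s := {i | i ≠ q}) fun i hi => by
    rintro rfl
    simp at hi] at hprod
  rw [← hprod.tprod_eq]
  refine tprod_congr fun i => ?_
  simp [Function.update_of_ne i.2, div_eq_mul_inv]

theorem ck_asymptotic_general (ha : Summable fun i => ‖a i‖ ^ 2) {q₁ q₂ : ι}
    (h₂ : a q₂ ≠ 0) (h₁₂ : ‖a q₂‖ < ‖a q₁‖) (h : ∀ i, i ≠ q₁ → i ≠ q₂ → ‖a i‖ < ‖a q₂‖)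
    {c : ℕ → 𝕜} (hc0 : c 0 = 1)
    (hc : ∀ k, 1 ≤ k →
      c k = (1 / (k : 𝕜)) * ∑ j ∈ Finset.Icc 2 k, c (k - j) * ∑' i, a i ^ j) :
    (fun k => c k - (NormedSpace.exp (-1) * ∏' i : {i // i ≠ q₁},
        (1 - a i / a q₁)⁻¹ * NormedSpace.exp (-(a i / a q₁))) * a q₁ ^ k) =O[atTop]
      fun k => a q₂ ^ k := by
  have hs : 0 < ‖a q₂‖ := norm_pos_iff.2 h₂
  have hne : q₂ ≠ q₁ := fun h => by simp [h] at h₁₂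
  have hle : ∀ i, i ≠ q₁ → ‖a i‖ ≤ ‖a q₂‖ := fun i hi =>
    if hi₂ : i = q₂ then hi₂ ▸ le_rfl else (h i hi hi₂).le
  have hle₁ : ∀ i, ‖a i‖ ≤ ‖a q₁‖ := fun i =>
    if hi : i = q₁ then hi ▸ le_rfl else (hle i hi).trans h₁₂.le
  obtain ⟨ρ, hρ, hρs, hρle⟩ := exists_bound_lt_of_tendsto_cofinite_zero
    (S := {i | i ≠ q₁ ∧ i ≠ q₂}) (tendsto_norm_cofinite_zero_of_summable_sq ha) hs
    fun i hi => h i hi.1 hi.2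
  set a' := Function.update a q₁ 0
  have ha' : Summable fun i => ‖a' i‖ ^ 2 := summable_norm_update_zero_sq ha q₁
  have hle' : ∀ i, ‖a' i‖ ≤ ‖a q₂‖ := fun i => norm_update_zero_le hs.le (hle i)
  have hB := coeff_logProduct_isBigO hρ (summable_norm_update_zero_sq ha' q₂) fun i =>
    norm_update_zero_le hρ.le fun hi₂ => norm_update_zero_le hρ.le fun hi₁ => hρle i ⟨hi₁, hi₂⟩
  have hlog' := logProduct_eq_update_add_logFactor hs ha' hle' q₂
  rw [show a' q₂ = a q₂ from Function.update_of_ne hne ..] at hlog'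
  have hODE := derivative_mk_eq_derivative_logProduct_mul hc
  rw [logProduct_eq_update_add_logFactor (hs.trans h₁₂) ha hle₁ q₁, hlog'] at hODE
  have hpoles := coeff_sub_isBigO_of_two_simple_poles hρ.le hρs h₁₂ hB
    (hlog' ▸ coeff_logProduct_isBigO hs ha' hle') hODE
  rw [← hlog', constantCoeff_logProduct, sub_zero, sub_eq_neg_add, NormedSpace.exp_add,
    exp_seriesSum_logProduct_update hs h₁₂ ha hle] at hpoles
  refine (hpoles.congr_left fun n => ?_).trans
    (IsBigO.of_norm_right (by simpa only [norm_pow] using isBigO_refl _ _))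
  rw [PowerSeries.coeff_mk, ← PowerSeries.coeff_zero_eq_constantCoeff_apply, PowerSeries.coeff_mk,
    hc0, one_mul]

end TwoDominantTerms

section Primes

lemma summable_norm_inv_primes_sq : Summable fun p : Nat.Primes => ‖((p : ℕ) : ℝ)⁻¹‖ ^ 2 := by
  simpa [Real.rpow_neg, Real.rpow_two] using
    Nat.Primes.summable_rpow.2 (show (-2 : ℝ) < -1 by norm_num)

lemma norm_inv_prime_lt_inv_three {p : Nat.Primes} (h₂ : p ≠ ⟨2, Nat.prime_two⟩)
    (h₃ : p ≠ ⟨3, Nat.prime_three⟩) : ‖((p : ℕ) : ℝ)⁻¹‖ < ‖((3 : ℕ) : ℝ)⁻¹‖ := by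
  rw [norm_inv, norm_inv, RCLike.norm_natCast, RCLike.norm_natCast]
  have hp : 3 < (p : ℕ) := by
    have := p.2.two_le
    have hne₂ : (p : ℕ) ≠ 2 := mt (Nat.Primes.coe_nat_inj p ⟨2, Nat.prime_two⟩).1 h₂
    have hne₃ : (p : ℕ) ≠ 3 := mt (Nat.Primes.coe_nat_inj p ⟨3, Nat.prime_three⟩).1 h₃
    omega
  gcongr

lemma Zp_eq_tsum_inv_pow (j : ℕ) : Zp j = ∑' p : Nat.Primes, ((p : ℕ) : ℝ)⁻¹ ^ j := by
  simp only [Zp, one_div, inv_pow]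

lemma prime_ne_two_iff {p : Nat.Primes} : p ≠ ⟨2, Nat.prime_two⟩ ↔ 2 < (p : ℕ) :=
  (Nat.Primes.coe_nat_inj p ⟨2, Nat.prime_two⟩).not.symm.trans p.2.two_le.lt_iff_ne'.symm

lemma tprod_primes_ne_two (f : Nat.Primes → ℝ) :
    ∏' p : {p : Nat.Primes // p ≠ ⟨2, Nat.prime_two⟩}, f p
      = ∏' p : {p : Nat.Primes // 2 < (p : ℕ)}, f p :=
  (Equiv.subtypeEquivRight fun _ => prime_ne_two_iff).tprod_eq
    fun p : {p : Nat.Primes // 2 < (p : ℕ)} => f p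

end Primes

theorem ck_asymptotic (c : ℕ → ℝ) (hc0 : c 0 = 1)
    (hc : ∀ k, 1 ≤ k → c k = (1 / (k : ℝ)) * ∑ j ∈ Finset.Icc 2 k, c (k - j) * Zp j)
    (η : ℝ)
    (hη : η = Real.exp (-1) * ∏' p : {p : Nat.Primes // 2 < (p : ℕ)},
        (1 - 2 / ((p.1 : ℕ) : ℝ))⁻¹ * Real.exp (-2 / ((p.1 : ℕ) : ℝ))) :
    (fun k : ℕ => c k - η / (2 : ℝ) ^ k) =O[atTop] fun k : ℕ => ((3 : ℝ) ^ k)⁻¹ := by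
  simp only [Zp_eq_tsum_inv_pow] at hc
  have h := ck_asymptotic_general summable_norm_inv_primes_sq
    (q₁ := ⟨2, Nat.prime_two⟩) (q₂ := ⟨3, Nat.prime_three⟩) (by norm_num) (by norm_num)
    (fun p h₂ h₃ => norm_inv_prime_lt_inv_three h₂ h₃) hc0 hc
  have hquot : ∀ p : ℕ, (p : ℝ)⁻¹ / (2 : ℝ)⁻¹ = 2 / p := fun p => by
    rw [div_inv_eq_mul, inv_mul_eq_div]
  simp only [Nat.cast_ofNat, hquot, ← Real.exp_eq_exp_ℝ, ← neg_div, inv_pow,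
    ← div_eq_mul_inv] at h
  rwa [tprod_primes_ne_two fun p => (1 - 2 / (p : ℝ))⁻¹ * Real.exp (-2 / (p : ℝ)), ← hη] at h
end

section
/- For every prime q, c_k = ∑_{p < q, p prime} α_p p^{-k} + O_q(q^{-k}) as k → ∞, where α_p = e^{-1} ∏_{q' ≠ p, q' prime} (1 - p/q')^{-1} e^{-p/q'}. -/
open Filter Real Asymptotics
open scoped Classical Topology BigOperators

/-!
The recursion for `c` says that `∑ k, c k * z ^ k = exp (∑ j ≥ 2, Z(j) * z ^ j / j)`, and expanding
`Z(j)` over the primes turns the right-hand side into `∏ p, (1 - z / p)⁻¹ * exp (-z / p)`, a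
meromorphic function whose only poles are simple and lie at the primes. Dividing out the factors
`1 - z / p` with `p ≤ q` leaves a function holomorphic on `|z| < q + 1`, so in that disc the
generating function is its polar part `∑ p ≤ q, α p * (1 - z / p)⁻¹` plus a holomorphic remainder,
whose Taylor coefficients are `O(q ^ (-k))` by Cauchy's estimates on `|z| = q`.
-/

/-- The `n`-th Taylor coefficient of `f` at the origin. -/
noncomputable def taylorCoeff (f : ℂ → ℂ) (n : ℕ) : ℂ := iteratedDeriv n f 0 / n.factorial

theorem taylorCoeff_zero (f : ℂ → ℂ) : taylorCoeff f 0 = f 0 := by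
  simp [taylorCoeff]

theorem iteratedDeriv_eq_factorial_mul_taylorCoeff (f : ℂ → ℂ) (n : ℕ) :
    iteratedDeriv n f 0 = n.factorial * taylorCoeff f n :=
  (mul_div_cancel₀ _ (Nat.cast_ne_zero.2 n.factorial_ne_zero)).symm

theorem taylorCoeff_deriv (f : ℂ → ℂ) (n : ℕ) :
    taylorCoeff (deriv f) n = (n + 1) * taylorCoeff f (n + 1) := by
  rw [taylorCoeff, ← iteratedDeriv_succ', iteratedDeriv_eq_factorial_mul_taylorCoeff,
    Nat.factorial_succ]
  field_simp [Nat.cast_ne_zero.2 n.factorial_ne_zero]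
  push_cast
  ring

theorem taylorCoeff_mul {f g : ℂ → ℂ} (hf : AnalyticAt ℂ f 0) (hg : AnalyticAt ℂ g 0) (n : ℕ) :
    taylorCoeff (f * g) n =
      ∑ i ∈ Finset.range (n + 1), taylorCoeff f i * taylorCoeff g (n - i) := by
  rw [taylorCoeff, iteratedDeriv_mul hf.contDiffAt hg.contDiffAt, Finset.sum_div]
  refine Finset.sum_congr rfl fun i hi => ?_
  have hn : (n.factorial : ℂ) ≠ 0 := Nat.cast_ne_zero.2 n.factorial_ne_zero
  rw [Nat.cast_choose ℂ (Finset.mem_range_succ_iff.1 hi), taylorCoeff, taylorCoeff]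
  field_simp

theorem taylorCoeff_congr {f g : ℂ → ℂ} (h : f =ᶠ[𝓝 0] g) (n : ℕ) :
    taylorCoeff f n = taylorCoeff g n := by
  rw [taylorCoeff, h.iteratedDeriv_eq, taylorCoeff]

theorem taylorCoeff_eq_of_hasSum {f : ℂ → ℂ} {b : ℕ → ℂ}
    (h : ∀ᶠ z in 𝓝 0, HasSum (fun n => b n * z ^ n) (f z)) : taylorCoeff f = b := by
  have hb : HasFPowerSeriesAt f (.ofScalars ℂ b) 0 := by
    rw [hasFPowerSeriesAt_iff]
    filter_upwards [h] with z hz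
    simpa only [FormalMultilinearSeries.coeff_ofScalars, smul_eq_mul, mul_comm, zero_add] using hz
  exact FormalMultilinearSeries.ofScalars_series_injective ℂ ℂ
    (hb.analyticAt.hasFPowerSeriesAt.eq_formalMultilinearSeries hb)

theorem hasSum_taylorCoeff_mul_pow {f : ℂ → ℂ} {R : ℝ} (hf : DifferentiableOn ℂ f (Metric.ball 0 R))
    {z : ℂ} (hz : z ∈ Metric.ball 0 R) : HasSum (fun n => taylorCoeff f n * z ^ n) (f z) := by
  refine (Complex.hasSum_taylorSeries_on_ball hf hz).congr_fun fun n => ?_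
  simp only [taylorCoeff, sub_zero, smul_eq_mul]
  ring

theorem differentiableOn_ball_of_hasSum {f : ℂ → ℂ} {b : ℕ → ℂ} {R : ℝ}
    (h : ∀ z ∈ Metric.ball 0 R, HasSum (fun n => b n * z ^ n) (f z)) :
    DifferentiableOn ℂ f (Metric.ball 0 R) := by
  rcases le_or_gt R 0 with hR | hR
  · simpa only [Metric.ball_eq_empty.2 hR] using differentiableOn_empty
  lift R to NNReal using hR.le
  have hradius : (R : ENNReal) ≤ (FormalMultilinearSeries.ofScalars ℂ b).radius := by
    refine ENNReal.le_of_forall_nnreal_lt fun r hr =>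
      FormalMultilinearSeries.le_radius_of_tendsto _ (l := 0) ?_
    have hrR : ((r : ℝ) : ℂ) ∈ Metric.ball 0 (R : ℝ) := by simpa using hr
    simpa using (h _ hrR).summable.tendsto_atTop_zero.norm
  have hball : HasFPowerSeriesOnBall f (.ofScalars ℂ b) 0 R :=
    ⟨hradius, by exact_mod_cast hR, fun {z} hz => by
      simpa only [FormalMultilinearSeries.ofScalars_apply_eq, smul_eq_mul, zero_add] using
        h z (by simpa using hz)⟩
  simpa only [Metric.eball_coe] using hball.differentiableOn

theorem taylorCoeff_isBigO {f : ℂ → ℂ} {ρ R : ℝ} (hρ : 0 < ρ) (hρR : ρ < R)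
    (hf : DifferentiableOn ℂ f (Metric.ball 0 R)) :
    taylorCoeff f =O[atTop] fun k => (ρ ^ k)⁻¹ := by
  have hsub : Metric.closedBall (0 : ℂ) ρ ⊆ Metric.ball 0 R := Metric.closedBall_subset_ball hρR
  obtain ⟨C, hC⟩ := (isCompact_sphere (0 : ℂ) ρ).exists_bound_of_continuousOn
    (hf.continuousOn.mono (Metric.sphere_subset_closedBall.trans hsub))
  have hcl : DiffContOnCl ℂ f (Metric.ball 0 ρ) := (hf.mono hsub).diffContOnCl_ball subset_rfl
  refine .of_bound C (.of_forall fun k => ?_)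
  have hk := Complex.norm_iteratedDeriv_le_of_forall_mem_sphere_norm_le k hρ hcl hC
  have hfac : (0 : ℝ) < k.factorial := by exact_mod_cast k.factorial_pos
  rw [taylorCoeff, norm_div, Complex.norm_natCast, div_le_iff₀ hfac, norm_inv, norm_pow,
    Real.norm_of_nonneg hρ.le]
  exact hk.trans_eq (by ring)

theorem taylorCoeff_exp_comp_succ {L : ℂ → ℂ} (hL : AnalyticAt ℂ L 0) (n : ℕ) :
    (n + 1) * taylorCoeff (fun z => Complex.exp (L z)) (n + 1) =
      ∑ j ∈ Finset.range (n + 1),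
        (j + 1) * taylorCoeff L (j + 1) * taylorCoeff (fun z => Complex.exp (L z)) (n - j) := by
  have hderiv : deriv (fun z => Complex.exp (L z)) =ᶠ[𝓝 0]
      deriv L * fun z => Complex.exp (L z) := by
    filter_upwards [hL.eventually_analyticAt] with z hz
    rw [deriv_cexp hz.differentiableAt, Pi.mul_apply, mul_comm]
  rw [← taylorCoeff_deriv, taylorCoeff_congr hderiv, taylorCoeff_mul hL.deriv hL.cexp']
  simp only [taylorCoeff_deriv]

theorem eq_taylorCoeff_exp_comp {L : ℂ → ℂ} (hL : AnalyticAt ℂ L 0) (hL0 : L 0 = 0) {c : ℕ → ℂ}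
    (hc0 : c 0 = 1) (hc : ∀ n : ℕ, (n + 1) * c (n + 1) =
      ∑ j ∈ Finset.range (n + 1), (j + 1) * taylorCoeff L (j + 1) * c (n - j)) :
    c = taylorCoeff fun z => Complex.exp (L z) := by
  funext k
  induction k using Nat.strong_induction_on with
  | _ k ih =>
    cases k with
    | zero => rw [hc0, taylorCoeff_zero, hL0, Complex.exp_zero]
    | succ n =>
      refine mul_left_cancel₀ (Nat.cast_add_one_ne_zero n) ?_
      rw [hc, taylorCoeff_exp_comp_succ hL]
      exact Finset.sum_congr rfl fun j _ => by rw [ih (n - j) (by omega)]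

theorem eval_basisDivisor_inv_inv {K : Type*} [Field K] {x y : K} (hx : x ≠ 0) (hy : y ≠ 0)
    (z : K) :
    (Lagrange.basisDivisor x⁻¹ y⁻¹).eval z = (1 - y / x)⁻¹ * (1 - y * z) := by
  have hnodes : x⁻¹ - y⁻¹ = -(1 - y / x) / y := by field_simp; ring
  have heval : z - y⁻¹ = -(1 - y * z) / y := by field_simp; ring
  simp only [Lagrange.basisDivisor, Polynomial.eval_mul, Polynomial.eval_C, Polynomial.eval_sub,
    Polynomial.eval_X, hnodes, heval]
  rw [inv_div, div_neg, neg_div, neg_mul_neg, div_mul_div_comm, mul_comm y,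
    mul_div_mul_right _ _ hy, div_eq_inv_mul]

theorem prod_inv_one_sub_mul_eq_sum {ι K : Type*} [Field K] {a : ι → K} {S : Finset ι}
    (hS : S.Nonempty) (ha : ∀ i ∈ S, a i ≠ 0) (hinj : Set.InjOn a S) {z : K}
    (hz : ∀ i ∈ S, 1 - a i * z ≠ 0) :
    ∏ i ∈ S, (1 - a i * z)⁻¹ =
      ∑ i ∈ S, (∏ j ∈ S.erase i, (1 - a j / a i)⁻¹) * (1 - a i * z)⁻¹ := by
  have hlagrange : ∑ i ∈ S, (Lagrange.basis S (fun i => (a i)⁻¹) i).eval z = 1 := by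
    rw [← Polynomial.eval_finsetSum,
      Lagrange.sum_basis (v := fun i => (a i)⁻¹) (inv_injective.comp_injOn hinj) hS,
      Polynomial.eval_one]
  calc ∏ i ∈ S, (1 - a i * z)⁻¹
      = ∑ i ∈ S, (Lagrange.basis S (fun i => (a i)⁻¹) i).eval z * ∏ j ∈ S, (1 - a j * z)⁻¹ := by
        rw [← Finset.sum_mul, hlagrange, one_mul]
    _ = _ := Finset.sum_congr rfl fun i hi => ?_
  rw [Lagrange.basis, Polynomial.eval_prod, ← Finset.prod_erase_mul S _ hi, ← mul_assoc,
    ← Finset.prod_mul_distrib]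
  refine congrArg (· * _) (Finset.prod_congr rfl fun j hj => ?_)
  have hjS := Finset.mem_of_mem_erase hj
  rw [eval_basisDivisor_inv_inv (ha i hi) (ha j hjS), mul_inv_cancel_right₀ (hz j hjS)]

theorem mul_inv_one_sub_mul_eq_sub_dslope {K : Type*} [NontriviallyNormedField K] (G : K → K)
    {a z : K} (ha : a ≠ 0) (hz : 1 - a * z ≠ 0) :
    G z * (1 - a * z)⁻¹ = G a⁻¹ * (1 - a * z)⁻¹ - a⁻¹ * dslope G a⁻¹ z := by
  have hza : z ≠ a⁻¹ := by
    rintro rfl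
    exact hz (by rw [mul_inv_cancel₀ ha, sub_self])
  rw [dslope_of_ne _ hza, slope_def_field]
  have hsub : z - a⁻¹ = -(1 - a * z) / a := by field_simp; ring
  rw [hsub]
  field_simp
  ring

theorem hasSum_geometric_one_sub_mul {K : Type*} [NormedField K] {a z : K} (h : ‖a * z‖ < 1) :
    HasSum (fun n => a ^ n * z ^ n) (1 - a * z)⁻¹ := by
  simpa only [mul_pow] using hasSum_geometric_of_norm_lt_one h

theorem eventually_norm_mul_lt_one {K : Type*} [NormedField K] (a : K) :
    ∀ᶠ z in 𝓝 0, ‖a * z‖ < 1 :=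
  (continuous_const_mul a).norm.continuousAt.eventually_lt_const (by simp)

theorem ne_zero_of_one_lt_norm_mul {E : Type*} [NormedAddCommGroup E] {w : E} {R : ℝ}
    (h : 1 < ‖w‖ * R) : w ≠ 0 := by
  rintro rfl
  rw [norm_zero, zero_mul] at h
  exact zero_lt_one.not_gt h

theorem exists_prod_inv_mul_eq_sum_add {ι : Type*} {a : ι → ℂ} {S : Finset ι} {G : ℂ → ℂ}
    {R : ℝ} (hinj : Set.InjOn a S) (hR : ∀ i ∈ S, 1 < ‖a i‖ * R)
    (hG : DifferentiableOn ℂ G (Metric.ball 0 R)) :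
    ∃ g : ℂ → ℂ, DifferentiableOn ℂ g (Metric.ball 0 R) ∧ ∀ z, (∀ i ∈ S, 1 - a i * z ≠ 0) →
      (∏ i ∈ S, (1 - a i * z)⁻¹) * G z =
        ∑ i ∈ S, (∏ j ∈ S.erase i, (1 - a j / a i)⁻¹) * G (a i)⁻¹ * (1 - a i * z)⁻¹ + g z := by
  rcases S.eq_empty_or_nonempty with rfl | hS
  · exact ⟨G, hG, fun z _ => by simp⟩
  have ha : ∀ i ∈ S, a i ≠ 0 := fun i hi => ne_zero_of_one_lt_norm_mul (hR i hi)
  refine ⟨fun z => ∑ i ∈ S,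
    (∏ j ∈ S.erase i, (1 - a j / a i)⁻¹) * (-(a i)⁻¹ * dslope G (a i)⁻¹ z), ?_, fun z hz => ?_⟩
  · refine DifferentiableOn.fun_sum fun i hi => ((DifferentiableOn.const_mul ?_ _).const_mul _)
    have hmem : (a i)⁻¹ ∈ Metric.ball (0 : ℂ) R := by
      rw [mem_ball_zero_iff, norm_inv, inv_lt_iff_one_lt_mul₀' (norm_pos_iff.2 (ha i hi))]
      exact hR i hi
    exact (Complex.differentiableOn_dslope (Metric.isOpen_ball.mem_nhds hmem)).2 hG
  · rw [prod_inv_one_sub_mul_eq_sum hS ha hinj hz, Finset.sum_mul, ← Finset.sum_add_distrib]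
    refine Finset.sum_congr rfl fun i hi => ?_
    rw [mul_assoc, mul_comm (1 - a i * z)⁻¹,
      mul_inv_one_sub_mul_eq_sub_dslope G (ha i hi) (hz i hi)]
    ring

theorem taylorCoeff_sub_sum_simple_poles_isBigO {ι : Type*} {a : ι → ℂ} {S : Finset ι}
    {f G : ℂ → ℂ} {ρ R : ℝ} (hinj : Set.InjOn a S) (hR : ∀ i ∈ S, 1 < ‖a i‖ * R)
    (hρ : 0 < ρ) (hρR : ρ < R) (hG : DifferentiableOn ℂ G (Metric.ball 0 R))
    (hf : ∀ᶠ z in 𝓝 0, f z = (∏ i ∈ S, (1 - a i * z)⁻¹) * G z) :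
    (fun k => taylorCoeff f k -
        ∑ i ∈ S, (∏ j ∈ S.erase i, (1 - a j / a i)⁻¹) * G (a i)⁻¹ * a i ^ k)
      =O[atTop] fun k => (ρ ^ k)⁻¹ := by
  obtain ⟨g, hg, hfg⟩ := exists_prod_inv_mul_eq_sum_add hinj hR hG
  have hcoeff : taylorCoeff f = fun k =>
      ∑ i ∈ S, (∏ j ∈ S.erase i, (1 - a j / a i)⁻¹) * G (a i)⁻¹ * a i ^ k + taylorCoeff g k := by
    refine taylorCoeff_eq_of_hasSum ?_
    filter_upwards [hf, Metric.ball_mem_nhds 0 (hρ.trans hρR),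
      (Filter.eventually_all_finset S).2 fun i _ => eventually_norm_mul_lt_one (a i)]
      with z hfz hzR hz
    rw [hfz, hfg z fun i hi => (isUnit_one_sub_of_norm_lt_one (hz i hi)).ne_zero]
    simp only [add_mul, Finset.sum_mul, mul_assoc _ (a _ ^ _)]
    exact (hasSum_sum fun i hi => (hasSum_geometric_one_sub_mul (hz i hi)).mul_left _).add
      (hasSum_taylorCoeff_mul_pow hg hzR)
  simpa only [hcoeff, add_sub_cancel_left] using taylorCoeff_isBigO hρ hρR hg

/-- Minus the logarithm of the genus-one Weierstrass factor `(1 - w) * exp w`. At `w = 1` the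
convention `log 0 = 0` makes it `-1`, so that its exponential there is the factor `e⁻¹` with the
pole removed. -/
noncomputable def negLogFactor (w : ℂ) : ℂ := -Complex.log (1 - w) - w

/-- Minus the logarithm of the genus-one canonical product with zeros at the `(a i)⁻¹`. -/
noncomputable def negLogProduct {ι : Type*} (a : ι → ℂ) (z : ℂ) : ℂ :=
  ∑' i, negLogFactor (a i * z)

/-- The `n`-th Taylor coefficient of `negLogProduct a`; the terms of degree less than two have been
cancelled by the exponential convergence factors. -/
noncomputable def negLogProductCoeff {ι : Type*} (a : ι → ℂ) (n : ℕ) : ℂ :=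
  if n < 2 then 0 else (∑' i, a i ^ n) / n

theorem exp_negLogFactor (w : ℂ) :
    Complex.exp (negLogFactor w) = (if w ≠ 1 then (1 - w)⁻¹ else 1) * Complex.exp (-w) := by
  rw [negLogFactor, sub_eq_add_neg, Complex.exp_add]
  split_ifs with hw
  · rw [Complex.exp_neg, Complex.exp_log (sub_ne_zero.2 (Ne.symm hw))]
  · rw [not_not.1 hw, sub_self, Complex.log_zero, neg_zero, Complex.exp_zero]

theorem negLogFactor_one : negLogFactor 1 = -1 := by
  simp [negLogFactor]

theorem hasSum_negLogFactor {w : ℂ} (hw : ‖w‖ < 1) :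
    HasSum (fun n : ℕ => w ^ (n + 2) / (n + 2)) (negLogFactor w) := by
  simpa [Finset.sum_range_succ, negLogFactor] using
    (hasSum_nat_add_iff' 2).2 (Complex.hasSum_taylorSeries_neg_log hw)

theorem norm_negLogFactor_le {w : ℂ} (hw : ‖w‖ ≤ 1 / 2) : ‖negLogFactor w‖ ≤ ‖w‖ ^ 2 := by
  have hlt : ‖-w‖ < 1 := by rw [norm_neg]; linarith
  have hinv : (1 - ‖w‖)⁻¹ ≤ 2 := inv_le_of_inv_le₀ two_pos (by linarith)
  calc ‖negLogFactor w‖ = ‖Complex.log (1 + -w) - -w‖ := by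
        rw [negLogFactor, ← norm_neg]
        ring_nf
    _ ≤ ‖w‖ ^ 2 * (1 - ‖w‖)⁻¹ / 2 := by
        simpa only [norm_neg] using Complex.norm_log_one_add_sub_self_le hlt
    _ ≤ ‖w‖ ^ 2 * 2 / 2 := by gcongr
    _ = ‖w‖ ^ 2 := mul_div_cancel_right₀ _ two_ne_zero

theorem norm_mul_le_norm_div {K : Type*} [NormedField K] {w z : K} {R : ℝ}
    (hw : ‖w‖ * R ≤ 1) (hz : ‖z‖ < R) :
    ‖w * z‖ ≤ ‖z‖ / R := by
  have hRpos : 0 < R := (norm_nonneg z).trans_lt hz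
  calc ‖w * z‖ = ‖w‖ * R * (‖z‖ / R) := by rw [norm_mul]; field_simp
    _ ≤ 1 * (‖z‖ / R) := by gcongr
    _ = ‖z‖ / R := one_mul _

theorem norm_div_natCast_add_two_le (w : ℂ) (n : ℕ) : ‖w / (n + 2)‖ ≤ ‖w‖ := by
  have hden : ‖(n : ℂ) + 2‖ = n + 2 := by exact_mod_cast Complex.norm_natCast (n + 2)
  rw [norm_div, hden]
  exact div_le_self (norm_nonneg w) (by linarith [n.cast_nonneg (α := ℝ)])

theorem hasSum_tsum_of_summable_uncurry {ι κ E : Type*} [NormedAddCommGroup E] [CompleteSpace E]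
    {f : ι → κ → E} {g : ι → E} (hf : Summable (Function.uncurry f))
    (hg : ∀ i, HasSum (f i) (g i)) : HasSum (fun k => ∑' i, f i k) (∑' i, g i) := by
  have hcomm : ∑' k, ∑' i, f i k = ∑' i, g i :=
    hf.tsum_comm.trans (tsum_congr fun i => (hg i).tsum_eq)
  exact hcomm ▸ hf.prod_symm.prod.hasSum

theorem exists_pos_norm_mul_le_one {ι E : Type*} [SeminormedAddCommGroup E] {a : ι → E}
    (ha : Summable fun i => ‖a i‖ ^ 2) : ∃ r : ℝ, 0 < r ∧ ∀ i, ‖a i‖ * r ≤ 1 := by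
  refine ⟨(√(∑' i, ‖a i‖ ^ 2) + 1)⁻¹, by positivity, fun i => ?_⟩
  rw [← div_eq_mul_inv, div_le_one (by positivity)]
  have hle : ‖a i‖ ≤ √(∑' i, ‖a i‖ ^ 2) :=
    Real.le_sqrt_of_sq_le (ha.le_tsum i fun j _ => sq_nonneg _)
  exact hle.trans (le_add_of_nonneg_right zero_le_one)

section CanonicalProduct

variable {ι : Type*} {a : ι → ℂ}

theorem summable_negLogFactor_mul (ha : Summable fun i => ‖a i‖ ^ 2) (z : ℂ) :
    Summable fun i => negLogFactor (a i * z) := by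
  have hsq : Summable fun i => ‖a i * z‖ ^ 2 := by
    simpa only [norm_mul, mul_pow] using ha.mul_right (‖z‖ ^ 2)
  refine hsq.of_norm_bounded_eventually ?_
  filter_upwards [hsq.tendsto_cofinite_zero.eventually_lt_const
    (show (0 : ℝ) < (1 / 2) ^ 2 by norm_num)] with i hi
  exact norm_negLogFactor_le (lt_of_pow_lt_pow_left₀ 2 (by norm_num) hi).le

theorem summable_mul_pow_div (ha : Summable fun i => ‖a i‖ ^ 2) {R : ℝ}
    (hR : ∀ i, ‖a i‖ * R ≤ 1) {z : ℂ} (hz : ‖z‖ < R) :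
    Summable (Function.uncurry fun (i : ι) (n : ℕ) => (a i * z) ^ (n + 2) / ((n : ℂ) + 2)) := by
  have hRpos : 0 < R := (norm_nonneg z).trans_lt hz
  have hgeom : Summable fun n => (‖z‖ / R) ^ n :=
    summable_geometric_of_lt_one (by positivity) ((div_lt_one hRpos).2 hz)
  refine .of_norm_bounded ((ha.mul_right (‖z‖ ^ 2)).mul_of_nonneg hgeom
    (fun i => by positivity) fun n => by positivity) fun ⟨i, n⟩ => ?_
  calc ‖(a i * z) ^ (n + 2) / ((n : ℂ) + 2)‖ ≤ ‖a i * z‖ ^ 2 * ‖a i * z‖ ^ n := by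
        rw [← pow_add, ← norm_pow, add_comm 2 n]
        exact norm_div_natCast_add_two_le _ n
    _ ≤ ‖a i‖ ^ 2 * ‖z‖ ^ 2 * (‖z‖ / R) ^ n := by
        rw [← mul_pow, ← norm_mul]
        gcongr
        exact norm_mul_le_norm_div (hR i) hz

theorem hasSum_negLogProduct (ha : Summable fun i => ‖a i‖ ^ 2) {R : ℝ}
    (hR : ∀ i, ‖a i‖ * R ≤ 1) {z : ℂ} (hz : z ∈ Metric.ball 0 R) :
    HasSum (fun n => negLogProductCoeff a n * z ^ n) (negLogProduct a z) := by
  rw [mem_ball_zero_iff] at hz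
  have hzR : ‖z‖ / R < 1 := (div_lt_one ((norm_nonneg z).trans_lt hz)).2 hz
  have hshift := hasSum_tsum_of_summable_uncurry (summable_mul_pow_div ha hR hz) fun i =>
    hasSum_negLogFactor ((norm_mul_le_norm_div (hR i) hz).trans_lt hzR)
  have hcoeff (n : ℕ) : ∑' i, (a i * z) ^ (n + 2) / ((n : ℂ) + 2) =
      negLogProductCoeff a (n + 2) * z ^ (n + 2) := by
    rw [negLogProductCoeff, if_neg (by omega), tsum_div_const]
    simp only [mul_pow, tsum_mul_right]
    push_cast
    ring
  rw [← hasSum_nat_add_iff' 2]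
  simpa [hcoeff, negLogProductCoeff, Finset.sum_range_succ, negLogProduct] using hshift

theorem eventually_hasSum_negLogProduct (ha : Summable fun i => ‖a i‖ ^ 2) :
    ∀ᶠ z in 𝓝 0, HasSum (fun n => negLogProductCoeff a n * z ^ n) (negLogProduct a z) := by
  obtain ⟨r, hr, har⟩ := exists_pos_norm_mul_le_one ha
  filter_upwards [Metric.ball_mem_nhds 0 hr] with z hz using hasSum_negLogProduct ha har hz

theorem differentiableOn_negLogProduct (ha : Summable fun i => ‖a i‖ ^ 2) {R : ℝ}
    (hR : ∀ i, ‖a i‖ * R ≤ 1) : DifferentiableOn ℂ (negLogProduct a) (Metric.ball 0 R) :=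
  differentiableOn_ball_of_hasSum fun _ => hasSum_negLogProduct ha hR

theorem taylorCoeff_negLogProduct (ha : Summable fun i => ‖a i‖ ^ 2) :
    taylorCoeff (negLogProduct a) = negLogProductCoeff a :=
  taylorCoeff_eq_of_hasSum (eventually_hasSum_negLogProduct ha)

theorem analyticAt_negLogProduct (ha : Summable fun i => ‖a i‖ ^ 2) :
    AnalyticAt ℂ (negLogProduct a) 0 := by
  obtain ⟨r, hr, har⟩ := exists_pos_norm_mul_le_one ha
  exact (differentiableOn_negLogProduct ha har).analyticAt (Metric.ball_mem_nhds 0 hr)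

theorem negLogProduct_zero (a : ι → ℂ) : negLogProduct a 0 = 0 := by
  simp [negLogProduct, negLogFactor]

theorem eq_taylorCoeff_exp_negLogProduct (ha : Summable fun i => ‖a i‖ ^ 2) {c : ℕ → ℂ}
    (hc0 : c 0 = 1)
    (hc : ∀ k : ℕ, 1 ≤ k → k * c k = ∑ j ∈ Finset.Icc 2 k, c (k - j) * ∑' i, a i ^ j) :
    c = taylorCoeff fun z => Complex.exp (negLogProduct a z) := by
  refine eq_taylorCoeff_exp_comp (analyticAt_negLogProduct ha) (negLogProduct_zero a) hc0
    fun n => ?_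
  have hcoeff (j : ℕ) : (j + 1) * taylorCoeff (negLogProduct a) (j + 1) * c (n - j) =
      if j = 0 then 0 else c (n + 1 - (j + 1)) * ∑' i, a i ^ (j + 1) := by
    rw [taylorCoeff_negLogProduct ha, negLogProductCoeff]
    rcases eq_or_ne j 0 with rfl | hj
    · simp
    · rw [if_neg (by omega), if_neg hj, Nat.cast_add_one,
        mul_div_cancel₀ _ (Nat.cast_add_one_ne_zero j), mul_comm, Nat.add_sub_add_right]
  simp only [hcoeff]
  rw [← Nat.cast_add_one, hc (n + 1) n.succ_pos, Finset.sum_range_succ', if_pos rfl, add_zero,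
    ← Finset.Ico_add_one_right_eq_Icc, Finset.sum_Ico_eq_sum_range]
  refine Finset.sum_congr rfl fun j _ => ?_
  rw [if_neg j.succ_ne_zero, show 2 + j = j + 1 + 1 by omega]

/-- The genus-one canonical product over the complement of `S`, inverted and multiplied by the
convergence factors of `S`: what remains of `exp (negLogProduct a z)` once its poles `(a i)⁻¹` with
`i ∈ S` are divided out. -/
noncomputable def regularPart (a : ι → ℂ) (S : Finset ι) (z : ℂ) : ℂ :=
  Complex.exp (negLogProduct (fun i : {i // i ∉ S} => a i) z - (∑ i ∈ S, a i) * z)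

theorem differentiableOn_regularPart (ha : Summable fun i => ‖a i‖ ^ 2) {S : Finset ι} {R : ℝ}
    (hS : ∀ i ∉ S, ‖a i‖ * R ≤ 1) : DifferentiableOn ℂ (regularPart a S) (Metric.ball 0 R) :=
  ((differentiableOn_negLogProduct (ha.subtype _) fun i => hS i i.2).sub
    (differentiableOn_id.const_mul _)).cexp

theorem exp_negLogProduct_eq_prod_mul_regularPart (ha : Summable fun i => ‖a i‖ ^ 2)
    (S : Finset ι) (z : ℂ) :
    Complex.exp (negLogProduct a z) =
      (∏ i ∈ S with a i * z ≠ 1, (1 - a i * z)⁻¹) * regularPart a S z := by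
  rw [negLogProduct, ← (summable_negLogFactor_mul ha z).sum_add_tsum_subtype_compl S,
    Complex.exp_add, Complex.exp_sum]
  simp only [exp_negLogFactor]
  rw [Finset.prod_mul_distrib, ← Complex.exp_sum, ← Finset.prod_filter, mul_assoc, regularPart,
    ← Complex.exp_add, Finset.sum_neg_distrib, Finset.sum_mul, neg_add_eq_sub, negLogProduct]

theorem exp_negLogProduct_inv (ha : Summable fun i => ‖a i‖ ^ 2) {i : ι} (hi : a i ≠ 0)
    (hne : ∀ j ≠ i, a j ≠ a i) :
    Complex.exp (negLogProduct a (a i)⁻¹) =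
      Complex.exp (-1) * ∏' j : {j // j ≠ i}, (1 - a j / a i)⁻¹ * Complex.exp (-(a j / a i)) := by
  have hsum := summable_negLogFactor_mul ha (a i)⁻¹
  have hfactor (j : {j // j ≠ i}) : Complex.exp (negLogFactor (a j * (a i)⁻¹)) =
      (1 - a j / a i)⁻¹ * Complex.exp (-(a j / a i)) := by
    rw [← div_eq_mul_inv, exp_negLogFactor, if_pos ((div_eq_one_iff_eq hi).not.2 (hne j j.2))]
  have hsplit : negLogProduct a (a i)⁻¹ =
      -1 + ∑' j : {j // j ≠ i}, negLogFactor (a j * (a i)⁻¹) := by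
    rw [negLogProduct, ← hsum.sum_add_tsum_subtype_compl {i}, Finset.sum_singleton,
      mul_inv_cancel₀ hi, negLogFactor_one]
    exact congrArg _ ((Equiv.subtypeEquivRight fun j => by simp).tsum_eq
      fun j : {j // j ≠ i} => negLogFactor (a j * (a i)⁻¹))
  have hproduct : HasProd (fun j : {j // j ≠ i} => Complex.exp (negLogFactor (a j * (a i)⁻¹)))
      (Complex.exp (∑' j : {j // j ≠ i}, negLogFactor (a j * (a i)⁻¹))) :=
    (hsum.subtype _).hasSum.cexp
  rw [hsplit, Complex.exp_add, ← hproduct.tprod_eq, tprod_congr hfactor]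

theorem taylorCoeff_exp_negLogProduct_isBigO (ha : Summable fun i => ‖a i‖ ^ 2) {S : Finset ι}
    {ρ R : ℝ} (hinj : Set.InjOn a S) (hR : ∀ i ∈ S, 1 < ‖a i‖ * R)
    (hS : ∀ i ∉ S, ‖a i‖ * R ≤ 1) (hρ : 0 < ρ) (hρR : ρ < R) :
    (fun k => taylorCoeff (fun z => Complex.exp (negLogProduct a z)) k -
        ∑ i ∈ S, Complex.exp (negLogProduct a (a i)⁻¹) * a i ^ k)
      =O[atTop] fun k => (ρ ^ k)⁻¹ := by
  have hresidue (i : ι) (hi : i ∈ S) : Complex.exp (negLogProduct a (a i)⁻¹) =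
      (∏ j ∈ S.erase i, (1 - a j / a i)⁻¹) * regularPart a S (a i)⁻¹ := by
    have hai := ne_zero_of_one_lt_norm_mul (hR i hi)
    have hfilter : {j ∈ S | a j * (a i)⁻¹ ≠ 1} = S.erase i := by
      ext j
      rw [Finset.mem_filter, Finset.mem_erase, and_comm, ← div_eq_mul_inv, Ne,
        div_eq_one_iff_eq hai]
      exact and_congr_left fun hj => not_congr (hinj.eq_iff hj hi)
    simp only [exp_negLogProduct_eq_prod_mul_regularPart ha S, hfilter, div_eq_mul_inv]
  have hnear : ∀ᶠ z in 𝓝 0, Complex.exp (negLogProduct a z) =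
      (∏ i ∈ S, (1 - a i * z)⁻¹) * regularPart a S z := by
    filter_upwards [(Filter.eventually_all_finset S).2 fun i _ => eventually_norm_mul_lt_one (a i)]
      with z hz
    have hfilter : {i ∈ S | a i * z ≠ 1} = S := Finset.filter_true_of_mem fun i hi h =>
      (isUnit_one_sub_of_norm_lt_one (hz i hi)).ne_zero (sub_eq_zero.2 h.symm)
    rw [exp_negLogProduct_eq_prod_mul_regularPart ha S, hfilter]
  refine (taylorCoeff_sub_sum_simple_poles_isBigO hinj hR hρ hρR
    (differentiableOn_regularPart ha hS) hnear).congr_left fun k => ?_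
  exact congrArg _ (Finset.sum_congr rfl fun i hi => by rw [hresidue i hi])

end CanonicalProduct

/-- The reciprocal of a prime, as a complex number: the family whose canonical product generates
the coefficients `c k`. -/
noncomputable def primeInv (p : Nat.Primes) : ℂ := ((p : ℕ) : ℂ)⁻¹

theorem norm_primeInv (p : Nat.Primes) : ‖primeInv p‖ = ((p : ℕ) : ℝ)⁻¹ := by
  rw [primeInv, norm_inv, Complex.norm_natCast]

theorem primeInv_ne_zero (p : Nat.Primes) : primeInv p ≠ 0 :=
  inv_ne_zero (Nat.cast_ne_zero.2 p.2.ne_zero)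

theorem primeInv_injective : Function.Injective primeInv := fun _ _ h =>
  Nat.Primes.coe_nat_injective (Nat.cast_injective (inv_injective h))

theorem summable_norm_primeInv_sq : Summable fun p => ‖primeInv p‖ ^ 2 := by
  simp only [norm_primeInv, inv_pow]
  exact (Real.summable_nat_pow_inv.2 one_lt_two).comp_injective Nat.Primes.coe_nat_injective

theorem ofReal_Zp (j : ℕ) : (Zp j : ℂ) = ∑' p, primeInv p ^ j := by
  simp only [Zp, primeInv, Complex.ofReal_tsum, one_div, inv_pow, Complex.ofReal_inv,
    Complex.ofReal_pow, Complex.ofReal_natCast]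

theorem ofReal_tprod {κ : Type*} (f : κ → ℝ) : ((∏' i, f i : ℝ) : ℂ) = ∏' i, (f i : ℂ) :=
  Function.LeftInverse.map_tprod (g := Complex.ofRealHom) (g' := Complex.re) f
    Complex.continuous_ofReal Complex.continuous_re Complex.ofReal_re

theorem exp_negLogProduct_primeInv_inv (p : Nat.Primes) :
    Complex.exp (negLogProduct primeInv (primeInv p)⁻¹) =
      (Real.exp (-1) * ∏' r : {r : Nat.Primes // (r : ℕ) ≠ p},
        (1 - ((p : ℕ) : ℝ) / ((r.1 : ℕ) : ℝ))⁻¹ *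
          Real.exp (-((p : ℕ) : ℝ) / ((r.1 : ℕ) : ℝ)) : ℝ) := by
  rw [exp_negLogProduct_inv summable_norm_primeInv_sq (primeInv_ne_zero p)
    fun r hr => primeInv_injective.ne hr, Complex.ofReal_mul, ofReal_tprod,
    ← (Equiv.subtypeEquivRight fun r => (Nat.Primes.coe_nat_inj r p).not).tprod_eq]
  have hratio (r : Nat.Primes) : primeInv r / primeInv p = ((p : ℕ) : ℂ) / ((r : ℕ) : ℂ) :=
    inv_div_inv _ _
  simp only [Equiv.subtypeEquivRight_apply_coe, hratio, neg_div]
  push_cast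
  rfl

theorem isBigO_sum_primesBelow_succ_sub (α : ℕ → ℝ) (q : ℕ) :
    (fun k : ℕ => ∑ p ∈ Nat.primesBelow (q + 1), α p / (p : ℝ) ^ k -
        ∑ p ∈ Nat.primesBelow q, α p / (p : ℝ) ^ k) =O[atTop] fun k : ℕ => ((q : ℝ) ^ k)⁻¹ := by
  rw [Nat.primesBelow_succ]
  split_ifs
  · simp only [Finset.sum_insert (Nat.notMem_primesBelow q), add_sub_cancel_right, div_eq_mul_inv]
    exact (isBigO_refl _ _).const_mul_left _
  · simp only [sub_self]
    exact isBigO_zero _ _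

theorem ofReal_eq_taylorCoeff_exp_negLogProduct_primeInv {c : ℕ → ℝ} (hc0 : c 0 = 1)
    (hc : ∀ k, 1 ≤ k → c k = (1 / (k : ℝ)) * ∑ j ∈ Finset.Icc 2 k, c (k - j) * Zp j) (k : ℕ) :
    (c k : ℂ) = taylorCoeff (fun z => Complex.exp (negLogProduct primeInv z)) k := by
  refine congrFun (eq_taylorCoeff_exp_negLogProduct summable_norm_primeInv_sq
    (c := fun k => (c k : ℂ)) (by simp [hc0]) fun k hk => ?_) k
  have hk0 : (k : ℝ) ≠ 0 := Nat.cast_ne_zero.2 (Nat.one_le_iff_ne_zero.1 hk)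
  have hreal : k * c k = ∑ j ∈ Finset.Icc 2 k, c (k - j) * Zp j := by
    rw [hc k hk, one_div, mul_inv_cancel_left₀ hk0]
  simp only [← ofReal_Zp]
  exact_mod_cast hreal

/-- The primes at most `q`. -/
noncomputable def primesLE (q : ℕ) : Finset Nat.Primes :=
  (Nat.primesBelow (q + 1)).preimage (↑) Nat.Primes.coe_nat_injective.injOn

theorem mem_primesLE {q : ℕ} {p : Nat.Primes} : p ∈ primesLE q ↔ (p : ℕ) < q + 1 :=
  Finset.mem_preimage.trans (Nat.mem_primesBelow.trans (and_iff_left p.2))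

theorem sum_primesLE {M : Type*} [AddCommMonoid M] (q : ℕ) (f : ℕ → M) :
    ∑ p ∈ primesLE q, f p = ∑ p ∈ Nat.primesBelow (q + 1), f p :=
  Finset.sum_preimage _ _ Nat.Primes.coe_nat_injective.injOn f fun p hp hrange =>
    absurd ⟨⟨p, Nat.prime_of_mem_primesBelow hp⟩, rfl⟩ hrange

theorem taylorCoeff_exp_negLogProduct_primeInv_isBigO {q : ℕ} (hq : q ≠ 0) :
    (fun k => taylorCoeff (fun z => Complex.exp (negLogProduct primeInv z)) k -
        ∑ p ∈ primesLE q, Complex.exp (negLogProduct primeInv (primeInv p)⁻¹) * primeInv p ^ k)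
      =O[atTop] fun k => ((q : ℝ) ^ k)⁻¹ := by
  have hpos (p : Nat.Primes) : (0 : ℝ) < (p : ℕ) := Nat.cast_pos.2 p.2.pos
  refine taylorCoeff_exp_negLogProduct_isBigO (R := q + 1) summable_norm_primeInv_sq
    primeInv_injective.injOn (fun p hp => ?_) (fun p hp => ?_)
    (Nat.cast_pos.2 (Nat.pos_of_ne_zero hq)) (lt_add_one _)
  · rw [norm_primeInv, inv_mul_eq_div, one_lt_div (hpos p)]
    exact_mod_cast mem_primesLE.1 hp
  · rw [norm_primeInv, inv_mul_eq_div, div_le_one (hpos p)]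
    exact_mod_cast not_lt.1 (mem_primesLE.not.1 hp)

theorem ck_expansion_general (c : ℕ → ℝ) (hc0 : c 0 = 1)
    (hc : ∀ k, 1 ≤ k → c k = (1 / (k : ℝ)) * ∑ j ∈ Finset.Icc 2 k, c (k - j) * Zp j)
    (α : ℕ → ℝ)
    (hα : ∀ p : ℕ, p.Prime → α p = Real.exp (-1) * ∏' r : {r : Nat.Primes // (r : ℕ) ≠ p},
        (1 - (p : ℝ) / ((r.1 : ℕ) : ℝ))⁻¹ * Real.exp (-(p : ℝ) / ((r.1 : ℕ) : ℝ)))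
    {q : ℕ} (hq : q ≠ 0) :
    (fun k : ℕ => c k - ∑ p ∈ Nat.primesBelow q, α p / (p : ℝ) ^ k)
      =O[atTop] fun k : ℕ => ((q : ℝ) ^ k)⁻¹ := by
  have hsum (k : ℕ) : ∑ p ∈ primesLE q,
      Complex.exp (negLogProduct primeInv (primeInv p)⁻¹) * primeInv p ^ k =
        (∑ p ∈ Nat.primesBelow (q + 1), α p / (p : ℝ) ^ k : ℝ) := by
    rw [← sum_primesLE, Complex.ofReal_sum]
    refine Finset.sum_congr rfl fun p _ => ?_
    rw [exp_negLogProduct_primeInv_inv, ← hα p p.2, primeInv, inv_pow, ← div_eq_mul_inv]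
    push_cast
    rfl
  have hle : (fun k : ℕ => c k - ∑ p ∈ Nat.primesBelow (q + 1), α p / (p : ℝ) ^ k)
      =O[atTop] fun k : ℕ => ((q : ℝ) ^ k)⁻¹ := by
    rw [← Complex.isBigO_ofReal_left]
    simpa only [Complex.ofReal_sub, ofReal_eq_taylorCoeff_exp_negLogProduct_primeInv hc0 hc,
      hsum] using taylorCoeff_exp_negLogProduct_primeInv_isBigO hq
  simpa only [sub_add_sub_cancel] using hle.add (isBigO_sum_primesBelow_succ_sub α q)

theorem ck_expansion (c : ℕ → ℝ) (hc0 : c 0 = 1)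
    (hc : ∀ k, 1 ≤ k → c k = (1 / (k : ℝ)) * ∑ j ∈ Finset.Icc 2 k, c (k - j) * Zp j)
    (α : ℕ → ℝ)
    (hα : ∀ p : ℕ, p.Prime → α p = Real.exp (-1) * ∏' r : {r : Nat.Primes // (r : ℕ) ≠ p},
        (1 - (p : ℝ) / ((r.1 : ℕ) : ℝ))⁻¹ * Real.exp (-(p : ℝ) / ((r.1 : ℕ) : ℝ))) :
    ∀ q : ℕ, q.Prime →
      (fun k : ℕ => c k - ∑ p ∈ Nat.primesBelow q, α p / (p : ℝ) ^ k)
        =O[atTop] fun k : ℕ => ((q : ℝ) ^ k)⁻¹ :=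
  fun _ hq => ck_expansion_general c hc0 hc α hα hq.ne_zero
end

section
/- For fixed integer k ≥ 1, ∑_{Ω(n)=k, n ≤ x} 1/n ∼ (log log x)^k / k! as x → ∞. -/
open Filter Real Asymptotics
open scoped Classical Topology BigOperators

/-!
Write `P(x)` for the sum of `1 / p` over the primes `p ≤ x`, which is `Ztr 1 x`, and `S_k(x)` for
the sum of `1 / n` over the `n ≤ x` with `Ω n = k`. Since `∑_p v_p(n) = k + 1` when `Ω n = k + 1`,
substituting `n = p m` gives
`(k + 1) S_{k+1}(x) = ∑_{p ≤ x} (1 / p) ∑_{m ≤ x / p, Ω m = k} (1 + v_p(m)) / m`.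
Enlarging or shrinking the inner sum yields `(k + 1) S_{k+1}(x) ≤ (P(x) + k) S_k(x)` and
`P(x) S_k(y) ≤ (k + 1) S_{k+1}(x y)`, hence `P(x ^ (1 / k)) ^ k ≤ k! S_k(x) ≤ (P(x) + k) ^ k`.
By Mertens, `P(x) = log log x + O(1)`: the upper bound follows from the factorization of `N!`,
the Chebyshev bound and partial summation, the lower bound from the Euler product. As
`log log (x ^ (1 / k))` differs from `log log x` by the constant `log k`, both ends of the sandwich
are asymptotic to `(log log x) ^ k`.
-/

open ArithmeticFunction (cardFactors)
open Finset (Icc)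

lemma isEquivalent_of_le_of_le {α : Type*} {l : Filter α} {u v w t : α → ℝ}
    (hu : u ~[l] t) (hw : w ~[l] t) (huv : u ≤ᶠ[l] v) (hvw : v ≤ᶠ[l] w) : v ~[l] t := by
  refine IsBigO.trans_isLittleO (g := fun a ↦ ‖(u - t) a‖ + ‖(w - t) a‖) ?_
    (hu.isLittleO.norm_left.add hw.isLittleO.norm_left)
  refine IsBigO.of_norm_eventuallyLE ?_
  filter_upwards [huv, hvw] with a hle hge
  simp only [Pi.sub_apply, norm_eq_abs, abs_le]
  constructor <;> linarith [neg_abs_le (u a - t a), le_abs_self (w a - t a),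
    abs_nonneg (u a - t a), abs_nonneg (w a - t a)]

lemma mem_primesUpTo {x : ℝ} {p : ℕ} : p ∈ primesUpTo x ↔ p.Prime ∧ (p : ℝ) ≤ x := by
  rw [primesUpTo, Finset.mem_filter, Finset.mem_range, Nat.lt_succ_iff, and_comm]
  exact and_congr_right fun hp ↦ Nat.le_floor_iff' hp.ne_zero

lemma primesUpTo_eq_primesLE_floor (x : ℝ) : primesUpTo x = Nat.primesLE ⌊x⌋₊ := by
  ext p
  simp only [primesUpTo, Finset.mem_filter, Finset.mem_range, Nat.mem_primesLE, Nat.lt_succ_iff]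

lemma Ztr_one (x : ℝ) : Ztr 1 x = ∑ p ∈ primesUpTo x, (p : ℝ)⁻¹ :=
  Finset.sum_congr rfl fun _ _ ↦ Real.rpow_neg_one _

lemma Ztr_nonneg (t x : ℝ) : 0 ≤ Ztr t x :=
  Finset.sum_nonneg fun _ _ ↦ by positivity

/-! ### Mertens bounds for sums over primes -/

lemma div_le_factorization_factorial {p : ℕ} (hp : p.Prime) (N : ℕ) :
    N / p ≤ N.factorial.factorization p := by
  have hdvd : (p * (N / p)).factorial ∣ N.factorial :=
    Nat.factorial_dvd_factorial (Nat.mul_div_le N p)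
  calc N / p ≤ (N / p).factorial.factorization p + N / p := Nat.le_add_left _ _
    _ = (p * (N / p)).factorial.factorization p := (Nat.factorization_factorial_mul hp).symm
    _ ≤ N.factorial.factorization p :=
      (Nat.factorization_le_iff_dvd (Nat.factorial_ne_zero _) N.factorial_ne_zero).2 hdvd p

lemma sum_div_mul_log_le_log_factorial (N : ℕ) :
    ∑ p ∈ Nat.primesLE N, ((N / p : ℕ) : ℝ) * log p ≤ log N.factorial := by
  have hsupp : N.factorial.factorization.support ⊆ Nat.primesLE N := fun p hp ↦ by
    rw [Nat.support_factorization, Nat.mem_primeFactors] at hp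
    exact Nat.mem_primesLE.2 ⟨(hp.1.dvd_factorial).1 hp.2.1, hp.1⟩
  rw [log_nat_eq_sum_factorization, Finsupp.sum_of_support_subset _ hsupp _ (by simp)]
  gcongr with p hp
  exact div_le_factorization_factorial (Nat.prime_of_mem_primesLE hp) N

lemma sum_primesLE_inv_mul_log_le {N : ℕ} (hN : N ≠ 0) :
    ∑ p ∈ Nat.primesLE N, (p : ℝ)⁻¹ * log p ≤ log N + log 4 := by
  have hN₀ : (0 : ℝ) < N := by positivity
  have hfloor (p : ℕ) : (N : ℝ) * (p : ℝ)⁻¹ ≤ (N / p : ℕ) + 1 := by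
    rw [← div_eq_mul_inv, ← Nat.floor_div_eq_div (K := ℝ)]
    exact (Nat.lt_floor_add_one _).le
  have hfactorial : log N.factorial ≤ N * log N := by
    rw [← log_pow]
    exact log_le_log (by positivity) (mod_cast N.factorial_le_pow)
  refine le_of_mul_le_mul_left ?_ hN₀
  calc (N : ℝ) * ∑ p ∈ Nat.primesLE N, (p : ℝ)⁻¹ * log p
      ≤ ∑ p ∈ Nat.primesLE N, (((N / p : ℕ) : ℝ) + 1) * log p := by
        rw [Finset.mul_sum]
        refine Finset.sum_le_sum fun p _ ↦ ?_
        rw [← mul_assoc]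
        exact mul_le_mul_of_nonneg_right (hfloor p) (log_natCast_nonneg p)
    _ = ∑ p ∈ Nat.primesLE N, ((N / p : ℕ) : ℝ) * log p + Chebyshev.theta N := by
        simp only [Chebyshev.theta_eq_sum_primesLE_log, add_mul, one_mul, Finset.sum_add_distrib]
    _ ≤ N * log N + log 4 * N :=
        add_le_add ((sum_div_mul_log_le_log_factorial N).trans hfactorial)
          (Chebyshev.theta_le_log4_mul_x hN₀.le)
    _ = N * (log N + log 4) := by ring

-- Partial summation against `1 / log`; the main term telescopes because
-- `1 - log n / log (n + 1) ≤ log (log (n + 1)) - log (log n)`.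
lemma sum_le_log_log_of_sum_mul_log_le {a : ℕ → ℝ} {C : ℝ}
    (ha : ∀ N ≥ 2, ∑ n ∈ Icc 2 N, a n * log n ≤ log N + C) {N : ℕ} (hN : 2 ≤ N) :
    ∑ n ∈ Icc 2 N, a n ≤ log (log N) + (1 + C / log 2 - log (log 2)) := by
  have hlog {n : ℕ} (hn : 2 ≤ n) : 0 < log n := log_pos (mod_cast hn)
  suffices key : ∑ n ∈ Icc 2 N, a n - (∑ n ∈ Icc 2 N, a n * log n) / log N ≤
      log (log N) - C / log N + (C / log 2 - log (log 2)) by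
    have hdiv : (∑ n ∈ Icc 2 N, a n * log n) / log N ≤ 1 + C / log N := by
      rw [div_le_iff₀ (hlog hN), add_mul, one_mul, div_mul_cancel₀ _ (hlog hN).ne']
      exact ha N hN
    linarith
  induction N, hN using Nat.le_induction with
  | base =>
    have : log 2 ≠ 0 := (log_pos one_lt_two).ne'
    simp [this]
  | succ n hn ih =>
    have h₀ := hlog hn
    have h₁ : 0 < log (n + 1 : ℕ) := hlog (by lia)
    have hinv : 0 ≤ (log n)⁻¹ - (log (n + 1 : ℕ))⁻¹ :=
      sub_nonneg.2 <| inv_anti₀ h₀ <| log_le_log (by positivity) (mod_cast n.le_succ)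
    have htelescope : log n * (log (n + 1 : ℕ))⁻¹ - 1 ≥ log (log n) - log (log (n + 1 : ℕ)) := by
      rw [← div_eq_mul_inv, ← log_div h₀.ne' h₁.ne']
      exact log_le_sub_one_of_pos (div_pos h₀ h₁)
    have hA := mul_le_mul_of_nonneg_right (ha n hn) hinv
    have hcancel : log n * (log n)⁻¹ = 1 := mul_inv_cancel₀ h₀.ne'
    have hcancel' : a (n + 1) * log (n + 1 : ℕ) * (log (n + 1 : ℕ))⁻¹ = a (n + 1) :=
      mul_inv_cancel_right₀ h₁.ne' _
    simp only [div_eq_mul_inv, Finset.sum_Icc_succ_top (by lia : 2 ≤ n + 1)] at ih ⊢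
    linarith

lemma Ztr_one_le {x : ℝ} (hx : 2 ≤ x) : Ztr 1 x ≤ log (log x) + (3 - log (log 2)) := by
  have hprimes (f : ℕ → ℝ) (N : ℕ) :
      ∑ n ∈ Icc 2 N, (if n.Prime then f n else 0) = ∑ p ∈ Nat.primesLE N, f p := by
    rw [Nat.primesLE_eq_filter_Icc_two, Finset.sum_filter]
  have hmertens (N : ℕ) (hN : N ≥ 2) :
      ∑ n ∈ Icc 2 N, (if n.Prime then (n : ℝ)⁻¹ else 0) * log n ≤ log N + log 4 := by
    simp only [ite_mul, zero_mul, hprimes fun n ↦ (n : ℝ)⁻¹ * log n]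
    exact sum_primesLE_inv_mul_log_le (by lia)
  have hfloor : 2 ≤ ⌊x⌋₊ := Nat.le_floor hx
  have hloglog : log (log ⌊x⌋₊) ≤ log (log x) := by
    have : (1 : ℝ) < ⌊x⌋₊ := mod_cast hfloor
    exact log_le_log (log_pos this) (log_le_log (by linarith) (Nat.floor_le (by linarith)))
  have hlog4 : log 4 / log 2 = 2 := by
    rw [show (4 : ℝ) = 2 ^ 2 by norm_num, log_pow]
    field_simp
    norm_num
  have hsum := sum_le_log_log_of_sum_mul_log_le hmertens hfloor
  rw [hprimes fun n ↦ (n : ℝ)⁻¹, hlog4] at hsum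
  rw [Ztr_one, primesUpTo_eq_primesLE_floor]
  linarith

lemma sum_inv_le_prod_primesLE (N : ℕ) :
    ∑ n ∈ Icc 1 N, (n : ℝ)⁻¹ ≤ ∏ p ∈ Nat.primesLE N, (1 - (p : ℝ)⁻¹)⁻¹ := by
  let f : ℕ →* ℝ := (invMonoidWithZeroHom (G₀ := ℝ)).toMonoidHom.comp (Nat.castRingHom ℝ)
  have hf {p : ℕ} (hp : p.Prime) : ‖f p‖ < 1 := by
    rw [show f p = (p : ℝ)⁻¹ from rfl, norm_inv, Real.norm_natCast]
    exact inv_lt_one_of_one_lt₀ (mod_cast hp.one_lt)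
  have heuler := (EulerProduct.summable_and_hasSum_smoothNumbers_prod_primesBelow_geometric
    (f := f) hf (N + 1)).2
  have hsmooth (n : ℕ) (hn : n ∈ Icc 1 N) : n ∈ Nat.smoothNumbers (N + 1) := by
    rw [Finset.mem_Icc] at hn
    exact Nat.mem_smoothNumbers_of_lt (by lia) (by lia)
  calc ∑ n ∈ Icc 1 N, (n : ℝ)⁻¹
      = ∑ m ∈ (Icc 1 N).subtype (· ∈ Nat.smoothNumbers (N + 1)), f m :=
        (Finset.sum_subtype_of_mem f hsmooth).symm
    _ ≤ _ := sum_le_hasSum _ (fun m _ ↦ inv_nonneg.2 (Nat.cast_nonneg (m : ℕ))) heuler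

lemma sum_Icc_inv_mul_sub_one {N : ℕ} (hN : 1 ≤ N) :
    ∑ n ∈ Icc 2 N, ((n : ℝ) * (n - 1))⁻¹ = 1 - (N : ℝ)⁻¹ := by
  induction N, hN using Nat.le_induction with
  | base => simp
  | succ n hn ih =>
    have : (n : ℝ) ≠ 0 := by positivity
    rw [Finset.sum_Icc_succ_top (by lia), ih]
    push_cast
    rw [add_sub_cancel_right]
    field_simp
    ring

lemma log_inv_one_sub_inv_le {y : ℝ} (hy : 1 < y) :
    log (1 - y⁻¹)⁻¹ ≤ y⁻¹ + (y * (y - 1))⁻¹ := by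
  have hy₀ : y ≠ 0 := by positivity
  have hy₁ : y - 1 ≠ 0 := by linarith
  have hpos : 0 < 1 - y⁻¹ := sub_pos.2 (inv_lt_one_of_one_lt₀ hy)
  calc log (1 - y⁻¹)⁻¹ ≤ (1 - y⁻¹)⁻¹ - 1 := log_le_sub_one_of_pos (inv_pos.2 hpos)
    _ = y⁻¹ + (y * (y - 1))⁻¹ := by
      rw [show 1 - y⁻¹ = (y - 1) / y by field_simp]
      field_simp
      ring

lemma log_log_le_Ztr_one {x : ℝ} (hx : 1 < x) : log (log x) ≤ Ztr 1 x + 1 := by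
  set N := ⌊x⌋₊
  have hN : 1 ≤ N := Nat.le_floor (mod_cast hx.le)
  have hone_lt {p : ℕ} (hp : p ∈ Nat.primesLE N) : (1 : ℝ) < p :=
    mod_cast Nat.one_lt_of_mem_primesLE hp
  have hlog : log x ≤ ∏ p ∈ Nat.primesLE N, (1 - (p : ℝ)⁻¹)⁻¹ := by
    refine (log_le_harmonic_floor x (by linarith)).trans ?_
    rw [harmonic_eq_sum_Icc]
    push_cast
    exact sum_inv_le_prod_primesLE N
  calc log (log x) ≤ log (∏ p ∈ Nat.primesLE N, (1 - (p : ℝ)⁻¹)⁻¹) :=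
        log_le_log (log_pos hx) hlog
    _ = ∑ p ∈ Nat.primesLE N, log (1 - (p : ℝ)⁻¹)⁻¹ :=
        log_prod fun p hp ↦ inv_ne_zero (sub_pos.2 (inv_lt_one_of_one_lt₀ (hone_lt hp))).ne'
    _ ≤ ∑ p ∈ Nat.primesLE N, ((p : ℝ)⁻¹ + ((p : ℝ) * (p - 1))⁻¹) :=
        Finset.sum_le_sum fun p hp ↦ log_inv_one_sub_inv_le (hone_lt hp)
    _ = Ztr 1 x + ∑ p ∈ Nat.primesLE N, ((p : ℝ) * (p - 1))⁻¹ := by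
        rw [Ztr_one, primesUpTo_eq_primesLE_floor, Finset.sum_add_distrib]
    _ ≤ Ztr 1 x + ∑ n ∈ Icc 2 N, ((n : ℝ) * (n - 1))⁻¹ := by
        have hsub : Nat.primesLE N ⊆ Icc 2 N :=
          Nat.primesLE_eq_filter_Icc_two N ▸ Finset.filter_subset Nat.Prime _
        refine add_le_add_right (Finset.sum_le_sum_of_subset_of_nonneg hsub fun n hn _ ↦ ?_) _
        have : (2 : ℝ) ≤ n := mod_cast (Finset.mem_Icc.1 hn).1
        exact inv_nonneg.2 (mul_nonneg (by linarith) (by linarith))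
    _ ≤ Ztr 1 x + 1 := by
        rw [sum_Icc_inv_mul_sub_one hN]
        linarith [inv_nonneg.2 (Nat.cast_nonneg (α := ℝ) N)]

lemma tendsto_log_log_atTop : Tendsto (fun x ↦ log (log x)) atTop atTop :=
  tendsto_log_atTop.comp tendsto_log_atTop

lemma Ztr_one_sub_log_log_isBigO_one :
    (fun x ↦ Ztr 1 x - log (log x)) =O[atTop] fun _ ↦ (1 : ℝ) := by
  refine IsBigO.of_bound (|3 - log (log 2)| + 1) ?_
  filter_upwards [eventually_ge_atTop 2] with x hx
  have hupper := Ztr_one_le hx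
  have hlower := log_log_le_Ztr_one (by linarith : 1 < x)
  rw [norm_one, mul_one, norm_eq_abs, abs_le]
  constructor <;> linarith [le_abs_self (3 - log (log 2)), abs_nonneg (3 - log (log 2))]

lemma isLittleO_const_log_log (c : ℝ) : (fun _ ↦ c) =o[atTop] fun x ↦ log (log x) :=
  isLittleO_const_left.2 <| Or.inr <| tendsto_norm_atTop_atTop.comp tendsto_log_log_atTop

lemma Ztr_one_isEquivalent : Ztr 1 ~[atTop] fun x ↦ log (log x) :=
  Ztr_one_sub_log_log_isBigO_one.trans_isLittleO (isLittleO_const_log_log 1)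

lemma log_log_rpow_isEquivalent {c : ℝ} (hc : 0 < c) :
    (fun x ↦ log (log (x ^ c))) ~[atTop] fun x ↦ log (log x) := by
  refine ((IsEquivalent.refl).add_isLittleO (isLittleO_const_log_log (log c))).congr_left ?_
  filter_upwards [eventually_gt_atTop 1] with x hx
  rw [Pi.add_apply, log_rpow (by linarith), log_mul hc.ne' (log_pos hx).ne', add_comm]

/-! ### Almost primes -/

/-- The `k`-almost primes up to `x`: the positive integers `n ≤ x` with `Ω n = k`. -/
noncomputable def almostPrimesUpTo (k : ℕ) (x : ℝ) : Finset ℕ :=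
  {n ∈ Icc 1 ⌊x⌋₊ | bigOmega n = k}

/-- The sum `S_k(x)` of the reciprocals of the `k`-almost primes up to `x`. -/
noncomputable def almostPrimeSum (k : ℕ) (x : ℝ) : ℝ :=
  ∑ n ∈ almostPrimesUpTo k x, (n : ℝ)⁻¹

section AlmostPrimes

variable {k m n p : ℕ} {x y : ℝ}

lemma bigOmega_eq_cardFactors (n : ℕ) : bigOmega n = cardFactors n := rfl

lemma mem_almostPrimesUpTo :
    n ∈ almostPrimesUpTo k x ↔ Nat.IsAlmostPrime k n ∧ (n : ℝ) ≤ x := by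
  rw [almostPrimesUpTo, Finset.mem_filter, Finset.mem_Icc, Nat.one_le_iff_ne_zero,
    Nat.IsAlmostPrime, bigOmega_eq_cardFactors, and_right_comm]
  exact and_congr_right fun hn ↦ Nat.le_floor_iff' hn.1

lemma isAlmostPrime_prime_mul_iff (hp : p.Prime) :
    Nat.IsAlmostPrime (k + 1) (p * m) ↔ Nat.IsAlmostPrime k m := by
  rcases eq_or_ne m 0 with rfl | hm
  · simp [Nat.IsAlmostPrime]
  · simp [Nat.IsAlmostPrime, ArithmeticFunction.cardFactors_mul hp.ne_zero hm,
      ArithmeticFunction.cardFactors_apply_prime hp, hp.ne_zero, add_comm 1]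

lemma almostPrimesUpTo_mono (k : ℕ) : Monotone (almostPrimesUpTo k) := fun _ _ hxy _ hn ↦
  have := mem_almostPrimesUpTo.1 hn
  mem_almostPrimesUpTo.2 ⟨this.1, this.2.trans hxy⟩

lemma filter_dvd_almostPrimesUpTo (hp : p.Prime) (k : ℕ) (x : ℝ) :
    {n ∈ almostPrimesUpTo (k + 1) x | p ∣ n} = (almostPrimesUpTo k (x / p)).image (p * ·) := by
  have hp₀ : (0 : ℝ) < p := mod_cast hp.pos
  have hmem (m : ℕ) :
      p * m ∈ almostPrimesUpTo (k + 1) x ↔ m ∈ almostPrimesUpTo k (x / p) := by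
    rw [mem_almostPrimesUpTo, mem_almostPrimesUpTo, isAlmostPrime_prime_mul_iff hp,
      le_div_iff₀' hp₀, Nat.cast_mul]
  ext n
  rw [Finset.mem_filter, Finset.mem_image]
  constructor
  · rintro ⟨hn, m, rfl⟩
    exact ⟨m, (hmem m).1 hn, rfl⟩
  · rintro ⟨m, hm, rfl⟩
    exact ⟨(hmem m).2 hm, dvd_mul_right p m⟩

lemma sum_factorization_of_mem_almostPrimesUpTo (hn : n ∈ almostPrimesUpTo k x) :
    ∑ p ∈ primesUpTo x, n.factorization p = k := by
  obtain ⟨⟨_, hΩ⟩, hnx⟩ := mem_almostPrimesUpTo.1 hn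
  have hsupp : n.factorization.support ⊆ primesUpTo x := fun p hp ↦ by
    rw [Nat.support_factorization] at hp
    refine mem_primesUpTo.2 ⟨Nat.prime_of_mem_primeFactors hp, le_trans ?_ hnx⟩
    exact mod_cast Nat.le_of_mem_primeFactors hp
  rw [← hΩ, ArithmeticFunction.cardFactors_eq_sum_factorization,
    Finsupp.sum_of_support_subset _ hsupp _ fun _ _ ↦ rfl]

lemma mul_almostPrimeSum_eq_sum_factorization (k : ℕ) (x : ℝ) :
    k * almostPrimeSum k x =
      ∑ p ∈ primesUpTo x, ∑ n ∈ almostPrimesUpTo k x, (n.factorization p : ℝ) * (n : ℝ)⁻¹ := by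
  rw [Finset.sum_comm, almostPrimeSum, Finset.mul_sum]
  refine Finset.sum_congr rfl fun n hn ↦ ?_
  rw [← Finset.sum_mul]
  congr 1
  exact mod_cast (sum_factorization_of_mem_almostPrimesUpTo hn).symm

lemma sum_factorization_mul_inv_almostPrimesUpTo (hp : p.Prime) (k : ℕ) (x : ℝ) :
    ∑ n ∈ almostPrimesUpTo (k + 1) x, (n.factorization p : ℝ) * (n : ℝ)⁻¹ =
      (p : ℝ)⁻¹ * ∑ m ∈ almostPrimesUpTo k (x / p), ((m.factorization p : ℝ) + 1) * (m : ℝ)⁻¹ := by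
  have hdvd (n : ℕ) (_ : n ∈ almostPrimesUpTo (k + 1) x)
      (hn : (n.factorization p : ℝ) * (n : ℝ)⁻¹ ≠ 0) : p ∣ n :=
    Nat.dvd_of_factorization_pos (Nat.cast_ne_zero.1 (left_ne_zero_of_mul hn))
  rw [← Finset.sum_filter_of_ne hdvd, filter_dvd_almostPrimesUpTo hp,
    Finset.sum_image fun _ _ _ _ ↦ Nat.eq_of_mul_eq_mul_left hp.pos, Finset.mul_sum]
  refine Finset.sum_congr rfl fun m hm ↦ ?_
  have hm₀ : m ≠ 0 := (mem_almostPrimesUpTo.1 hm).1.1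
  rw [Nat.factorization_mul hp.ne_zero hm₀, Finsupp.add_apply, hp.factorization_self]
  push_cast
  rw [mul_inv]
  ring

lemma succ_mul_almostPrimeSum_succ (k : ℕ) (x : ℝ) :
    (k + 1) * almostPrimeSum (k + 1) x = ∑ p ∈ primesUpTo x,
      (p : ℝ)⁻¹ * ∑ m ∈ almostPrimesUpTo k (x / p), ((m.factorization p : ℝ) + 1) * (m : ℝ)⁻¹ := by
  rw [← Nat.cast_succ, mul_almostPrimeSum_eq_sum_factorization]
  exact Finset.sum_congr rfl fun p hp ↦
    sum_factorization_mul_inv_almostPrimesUpTo (mem_primesUpTo.1 hp).1 k x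

lemma succ_mul_almostPrimeSum_succ_le (k : ℕ) (x : ℝ) :
    (k + 1) * almostPrimeSum (k + 1) x ≤ (Ztr 1 x + k) * almostPrimeSum k x := by
  have hterm (p : ℕ) (hp : p ∈ primesUpTo x) :
      (p : ℝ)⁻¹ * ∑ m ∈ almostPrimesUpTo k (x / p), ((m.factorization p : ℝ) + 1) * (m : ℝ)⁻¹ ≤
        (p : ℝ)⁻¹ * almostPrimeSum k x +
          ∑ m ∈ almostPrimesUpTo k x, (m.factorization p : ℝ) * (m : ℝ)⁻¹ := by
    obtain ⟨hprime, hpx⟩ := mem_primesUpTo.1 hp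
    have hp₁ : (1 : ℝ) ≤ p := mod_cast hprime.one_le
    have hsub : almostPrimesUpTo k (x / p) ⊆ almostPrimesUpTo k x :=
      almostPrimesUpTo_mono k (div_le_self (by linarith) hp₁)
    calc (p : ℝ)⁻¹ * ∑ m ∈ almostPrimesUpTo k (x / p), ((m.factorization p : ℝ) + 1) * (m : ℝ)⁻¹
        ≤ (p : ℝ)⁻¹ * ∑ m ∈ almostPrimesUpTo k x, ((m.factorization p : ℝ) + 1) * (m : ℝ)⁻¹ := by
          gcongr
      _ = (p : ℝ)⁻¹ * almostPrimeSum k x +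
            (p : ℝ)⁻¹ * ∑ m ∈ almostPrimesUpTo k x, (m.factorization p : ℝ) * (m : ℝ)⁻¹ := by
          simp only [almostPrimeSum, add_mul, one_mul, Finset.sum_add_distrib]
          ring
      _ ≤ _ := by
          gcongr
          exact mul_le_of_le_one_left (by positivity) (inv_le_one_of_one_le₀ hp₁)
  calc (k + 1) * almostPrimeSum (k + 1) x
      ≤ ∑ p ∈ primesUpTo x, ((p : ℝ)⁻¹ * almostPrimeSum k x +
          ∑ m ∈ almostPrimesUpTo k x, (m.factorization p : ℝ) * (m : ℝ)⁻¹) := by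
        rw [succ_mul_almostPrimeSum_succ]
        exact Finset.sum_le_sum hterm
    _ = (Ztr 1 x + k) * almostPrimeSum k x := by
        rw [Finset.sum_add_distrib, ← Finset.sum_mul, ← Ztr_one,
          ← mul_almostPrimeSum_eq_sum_factorization, add_mul]

lemma Ztr_one_mul_almostPrimeSum_le (k : ℕ) (x : ℝ) (hy : 1 ≤ y) :
    Ztr 1 x * almostPrimeSum k y ≤ (k + 1) * almostPrimeSum (k + 1) (x * y) := by
  have hterm (p : ℕ) (hp : p ∈ primesUpTo x) : (p : ℝ)⁻¹ * almostPrimeSum k y ≤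
      (p : ℝ)⁻¹ * ∑ m ∈ almostPrimesUpTo k (x * y / p),
        ((m.factorization p : ℝ) + 1) * (m : ℝ)⁻¹ := by
    obtain ⟨hprime, hpx⟩ := mem_primesUpTo.1 hp
    have hp₀ : (0 : ℝ) < p := mod_cast hprime.pos
    have hyp : y ≤ x * y / p := (le_div_iff₀' hp₀).2 (by gcongr)
    have hsub := almostPrimesUpTo_mono k hyp
    calc (p : ℝ)⁻¹ * almostPrimeSum k y
        ≤ (p : ℝ)⁻¹ * almostPrimeSum k (x * y / p) := by
          unfold almostPrimeSum
          gcongr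
      _ ≤ _ := by
          unfold almostPrimeSum
          gcongr with m
          exact le_mul_of_one_le_left (by positivity) (le_add_of_nonneg_left (Nat.cast_nonneg _))
  have hsub : primesUpTo x ⊆ primesUpTo (x * y) := fun p hp ↦ by
    obtain ⟨hprime, hpx⟩ := mem_primesUpTo.1 hp
    have hx : 0 ≤ x := p.cast_nonneg.trans hpx
    exact mem_primesUpTo.2 ⟨hprime, hpx.trans (le_mul_of_one_le_right hx hy)⟩
  rw [succ_mul_almostPrimeSum_succ, Ztr_one, Finset.sum_mul]
  exact (Finset.sum_le_sum hterm).trans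
    (Finset.sum_le_sum_of_subset_of_nonneg hsub fun _ _ _ ↦ by positivity)

lemma almostPrimeSum_zero (hx : 1 ≤ x) : almostPrimeSum 0 x = 1 := by
  have : almostPrimesUpTo 0 x = {1} := by
    ext n
    rw [mem_almostPrimesUpTo, Nat.isAlmostPrime_zero_iff, Finset.mem_singleton]
    exact and_iff_left_of_imp fun hn ↦ by simpa [hn]
  simp [almostPrimeSum, this]

lemma factorial_mul_almostPrimeSum_le (k : ℕ) (hx : 1 ≤ x) :
    k.factorial * almostPrimeSum k x ≤ (Ztr 1 x + k) ^ k := by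
  have hZ := Ztr_nonneg 1 x
  induction k with
  | zero => simp [almostPrimeSum_zero hx]
  | succ k ih =>
    calc ((k + 1).factorial : ℝ) * almostPrimeSum (k + 1) x
        = k.factorial * ((k + 1) * almostPrimeSum (k + 1) x) := by
          rw [Nat.factorial_succ]; push_cast; ring
      _ ≤ k.factorial * ((Ztr 1 x + k) * almostPrimeSum k x) :=
          mul_le_mul_of_nonneg_left (succ_mul_almostPrimeSum_succ_le k x) (Nat.cast_nonneg _)
      _ = (Ztr 1 x + k) * (k.factorial * almostPrimeSum k x) := by ring
      _ ≤ (Ztr 1 x + k) * (Ztr 1 x + k) ^ k := by gcongr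
      _ = (Ztr 1 x + k) ^ (k + 1) := (pow_succ' _ _).symm
      _ ≤ (Ztr 1 x + (k + 1 : ℕ)) ^ (k + 1) := by gcongr; exact k.le_succ

lemma Ztr_one_pow_le (k : ℕ) (hx : 1 ≤ x) :
    Ztr 1 x ^ k ≤ k.factorial * almostPrimeSum k (x ^ k) := by
  have hZ := Ztr_nonneg 1 x
  induction k with
  | zero => simp [almostPrimeSum_zero le_rfl]
  | succ k ih =>
    calc Ztr 1 x ^ (k + 1) = Ztr 1 x * Ztr 1 x ^ k := pow_succ' _ _
      _ ≤ Ztr 1 x * (k.factorial * almostPrimeSum k (x ^ k)) := by gcongr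
      _ = k.factorial * (Ztr 1 x * almostPrimeSum k (x ^ k)) := by ring
      _ ≤ k.factorial * ((k + 1) * almostPrimeSum (k + 1) (x * x ^ k)) :=
          mul_le_mul_of_nonneg_left (Ztr_one_mul_almostPrimeSum_le k x (one_le_pow₀ hx))
            (Nat.cast_nonneg _)
      _ = (k + 1).factorial * almostPrimeSum (k + 1) (x ^ (k + 1)) := by
          rw [Nat.factorial_succ, pow_succ']; push_cast; ring

lemma almostPrimeSum_eq_sum_ite (k : ℕ) (x : ℝ) :
    almostPrimeSum k x = ∑ n ∈ Icc 1 ⌊x⌋₊, if bigOmega n = k then (1 : ℝ) / n else 0 := by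
  simp only [almostPrimeSum, almostPrimesUpTo, Finset.sum_filter, one_div]

end AlmostPrimes

theorem landau_asymptotic (k : ℕ) (hk : 1 ≤ k) :
    Asymptotics.IsEquivalent atTop
      (fun x : ℝ => ∑ n ∈ Finset.Icc 1 ⌊x⌋₊,
        if bigOmega n = k then (1 : ℝ) / n else 0)
      (fun x : ℝ => (Real.log (Real.log x)) ^ k / (Nat.factorial k)) := by
  have hk₀ : (0 : ℝ) < (k : ℝ)⁻¹ := by positivity
  have hlower : (fun x : ℝ ↦ Ztr 1 (x ^ (k : ℝ)⁻¹) ^ k) ~[atTop] fun x ↦ log (log x) ^ k :=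
    ((Ztr_one_isEquivalent.comp_tendsto (tendsto_rpow_atTop hk₀)).trans
      (log_log_rpow_isEquivalent hk₀)).pow k
  have hupper : (fun x ↦ (Ztr 1 x + k) ^ k) ~[atTop] fun x ↦ log (log x) ^ k :=
    (Ztr_one_isEquivalent.add_isLittleO (isLittleO_const_log_log k)).pow k
  have hsum : (fun x ↦ k.factorial * almostPrimeSum k x) ~[atTop] fun x ↦ log (log x) ^ k := by
    refine isEquivalent_of_le_of_le hlower hupper ?_ ?_ <;>
      filter_upwards [eventually_ge_atTop 1] with x hx
    · have hroot : (x ^ (k : ℝ)⁻¹) ^ k = x := rpow_inv_natCast_pow (by linarith) (by lia)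
      simpa only [hroot] using Ztr_one_pow_le k (one_le_rpow hx hk₀.le)
    · exact factorial_mul_almostPrimeSum_le k hx
  have hfact : (k.factorial : ℝ) ≠ 0 := mod_cast k.factorial_ne_zero
  refine (hsum.div (IsEquivalent.refl (u := fun _ ↦ (k.factorial : ℝ)))).congr_left ?_
  exact .of_forall fun x ↦
    (mul_div_cancel_left₀ _ hfact).trans (almostPrimeSum_eq_sum_ite k x)
end
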